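/- Let q = p^m ≡ 9 (mod 16) be a prime power (i.e., q = 8f+1 with f odd) in which 2 is a quartic residue (2 ∈ C_0^4). Let x and a be the integers with q = x² + 4y² (y ∈ ℤ), x ≡ 1 (mod 4), and q = a² + 2b² (b ∈ ℤ), a ≡ 1 (mod 4), given by the unique such representations of q, and suppose a = 1. Then D = {C_0^8, C_1^8, C_4^8, C_6^8} is a (q,4,(q−1)/8;(q−12−x)/16,(q−6+x)/16)-DPDF relative to C_0^2. -/

import Mathlib

open Finset

section Defs

variable {G : Type*} [AddCommGroup G] [Fintype G] [DecidableEq G]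

/-- The multiset `Δ(D)` of internal differences `x - y` (for `x ≠ y` in `D`). -/
def intDiff (D : Finset G) : Multiset G :=
  ((D ×ˢ D).filter (fun p => p.1 ≠ p.2)).val.map (fun p => p.1 - p.2)

/-- The multiset `Δ(D, E)` of external differences `x - y` for `x ∈ D`, `y ∈ E`. -/
def extDiff (D E : Finset G) : Multiset G :=
  (D ×ˢ E).val.map (fun p => p.1 - p.2)

/-- The finset `G^*` of nonzero elements of `G`. -/
def Gstar (G : Type*) [AddCommGroup G] [Fintype G] [DecidableEq G] : Finset G :=
  Finset.univ.erase 0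

/-- `A` is a `(v, k, lam, mu)` partial difference set in `G`:
`Δ(A) = lam • A^* + mu • (G^* \ A)`. -/
def IsPDS (A : Finset G) (v k lam mu : ℕ) : Prop :=
  Fintype.card G = v ∧ A.card = k ∧
    intDiff A = lam • (A.erase 0).val + mu • (Gstar G \ A).val

/-- `D` is a `(v, k, lam, mu)` skew partial difference set corresponding to the
`(v, k, lam, mu)`-PDS `A`: `Δ(D) = lam • A^* + mu • (G^* \ A)`. -/
def IsSkewPDS (D A : Finset G) (v k lam mu : ℕ) : Prop :=
  IsPDS A v k lam mu ∧ D.card = k ∧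
    intDiff D = lam • (A.erase 0).val + mu • (Gstar G \ A).val

/-- `D` is an `(n, m, k₁, …, k_m; lam, mu)` disjoint partial difference family relative
to `T`: the `D i` are pairwise disjoint subsets of `G^*` of sizes `k i`, and
`∑ i, Δ(D i) = lam • T + mu • (G^* \ T)`. -/
def IsDPDF {ι : Type*} [Fintype ι] (D : ι → Finset G) (n m : ℕ) (k : ι → ℕ)
    (T : Finset G) (lam mu : ℕ) : Prop :=
  Fintype.card G = n ∧ Fintype.card ι = m ∧
    (∀ i, (0 : G) ∉ D i) ∧ (∀ i, (D i).card = k i) ∧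
    (Pairwise (fun i j => Disjoint (D i) (D j))) ∧
    ∑ i, intDiff (D i) = lam • T.val + mu • (Gstar G \ T).val

/-- `D` is an `(n, m, k₁, …, k_m; lam, mu)` external partial difference family relative
to `T`: the `D i` are pairwise disjoint subsets of `G^*` of sizes `k i`, and
`∑_{i ≠ j}, Δ(D i, D j) = lam • T + mu • (G^* \ T)`. -/
def IsEPDF {ι : Type*} [Fintype ι] [DecidableEq ι] (D : ι → Finset G) (n m : ℕ)
    (k : ι → ℕ) (T : Finset G) (lam mu : ℕ) : Prop :=
  Fintype.card G = n ∧ Fintype.card ι = m ∧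
    (∀ i, (0 : G) ∉ D i) ∧ (∀ i, (D i).card = k i) ∧
    (Pairwise (fun i j => Disjoint (D i) (D j))) ∧
    ∑ i, ∑ j ∈ Finset.univ.erase i, extDiff (D i) (D j)
      = lam • T.val + mu • (Gstar G \ T).val

/-- `D` is an `(n, m, k₁, …, k_m, lam)` disjoint difference family:
`∑ i, Δ(D i) = lam • G^*`. -/
def IsDDF {ι : Type*} [Fintype ι] (D : ι → Finset G) (n m : ℕ) (k : ι → ℕ)
    (lam : ℕ) : Prop :=
  Fintype.card G = n ∧ Fintype.card ι = m ∧
    (∀ i, (0 : G) ∉ D i) ∧ (∀ i, (D i).card = k i) ∧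
    (Pairwise (fun i j => Disjoint (D i) (D j))) ∧
    ∑ i, intDiff (D i) = lam • (Gstar G).val

/-- `D` is an `(n, m, k₁, …, k_m, lam)` external difference family:
`∑_{i ≠ j}, Δ(D i, D j) = lam • G^*`. -/
def IsEDF {ι : Type*} [Fintype ι] [DecidableEq ι] (D : ι → Finset G) (n m : ℕ)
    (k : ι → ℕ) (lam : ℕ) : Prop :=
  Fintype.card G = n ∧ Fintype.card ι = m ∧
    (∀ i, (0 : G) ∉ D i) ∧ (∀ i, (D i).card = k i) ∧
    (Pairwise (fun i j => Disjoint (D i) (D j))) ∧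
    ∑ i, ∑ j ∈ Finset.univ.erase i, extDiff (D i) (D j) = lam • (Gstar G).val

end Defs

section Cyclotomy

variable {F : Type*} [Field F] [Fintype F] [DecidableEq F]

/-- The cyclotomic class `C_i^e = α^i ⟨α^e⟩` of order `e` in the finite field `F`,
with respect to the primitive element `α`.  (Since `α` has multiplicative order at most
`|F| - 1`, letting `j` range over `0, …, |F| - 1` captures the whole class.) -/
def cycClass (α : F) (e i : ℕ) : Finset F :=
  (Finset.range (Fintype.card F)).image (fun j => α ^ (e * j + i))

/-- `α` is a primitive element of the finite field `F`: every nonzero element of `F`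
is a power of `α`. -/
def IsPrimitiveElt (α : F) : Prop :=
  ∀ x : F, x ≠ 0 → ∃ n : ℕ, α ^ n = x

end Cyclotomy

/-!
Let `χ` be a complex character of order `8` of `𝔽_q`. Each class `C_i^8` is a level set of `χ`, and
division by the first term of a difference shows that `d` is a difference of two of its elements in
`N(χ(d) χ(α)⁻ⁱ)` ways, where `N(w)` counts the `t` with `χ(t) = 1` and `χ(1 - t) = w`. The family
is a partial difference family once `N(w)` depends only on `w⁴ = ±1`, with values `u` and `v`: the
three classes of even index and the one of odd index then give `λ = 3u + v` and `μ = 3v + u`.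

Since `χ(-1) = -1`, `N(-w) = N(w)`. When `2` is a quartic residue, the Hasse–Davenport relation
reduces the Fourier coefficients of `N` at the even frequencies to `A = Re J(χ, χ⁴)` and
`X = Re J(χ², χ⁴)`; the remaining equality `N(1) = N(i)` amounts to `A = -1`.

The norms of these sums are `A² + 2B² = q` and `X² + 4Y² = q`. For prime `q` such representations
are unique up to signs, which congruences modulo `8` and `4` fix, so `q = 1 + 2b²` forces `A = -1`,
and `X = -x`. A proper prime power of the form `1 + 2b²` that is `9` modulo `16` equals `9`, by
comparing powers of `2` in `ℤ[√-2]` for odd exponents and by factoring for even ones; in that case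
the size of `A` and the same congruences suffice.
-/

section Representations

/-! ### Representations by `x² + n y²` -/

lemma not_dvd_of_prime_eq_sq_add {p n x y : ℤ} (hp : Prime p) (hpn : ¬ p ∣ n)
    (h : p = x ^ 2 + n * y ^ 2) : ¬ p ∣ x := by
  intro hx
  have hpy : p ∣ n * y ^ 2 :=
    (dvd_add_right (hx.trans (dvd_pow_self x two_ne_zero))).1 (dvd_of_eq h)
  have hy : p ∣ y := hp.dvd_of_dvd_pow ((hp.dvd_or_dvd hpy).resolve_left hpn)
  have hpp : p * p ∣ p * 1 := by
    rw [mul_one, ← sq]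
    nth_rewrite 2 [h]
    exact dvd_add (pow_dvd_pow_of_dvd hx 2) (dvd_mul_of_dvd_right (pow_dvd_pow_of_dvd hy 2) n)
  exact hp.not_isUnit (isUnit_of_dvd_one ((mul_dvd_mul_iff_left hp.ne_zero).1 hpp))

lemma eq_zero_of_dvd_of_sq_eq {P n D E : ℤ} (hP : P ≠ 0) (hn : 2 ≤ n) (hD : P ∣ D)
    (h : P ^ 2 = E ^ 2 + n * D ^ 2) : D = 0 := by
  obtain ⟨c, rfl⟩ := hD
  suffices c = 0 by simp [this]
  by_contra hc
  have hPc : P ^ 2 ≤ (P * c) ^ 2 := by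
    rw [mul_pow]
    exact le_mul_of_one_le_right (sq_nonneg P) (Int.add_one_le_of_lt (sq_pos_of_ne_zero hc))
  nlinarith [sq_nonneg E, sq_pos_of_ne_zero hP, mul_le_mul_of_nonneg_right hn (sq_nonneg (P * c))]

/-- `P²` is represented by the principal form in two ways, with second coordinates `xw ∓ yz`; the
prime power `P` divides one of these, which therefore vanishes. -/
lemma sq_eq_sq_of_prime_pow_eq_sq_add {p n x y z w : ℤ} {m : ℕ} (hp : Prime p) (hp2 : ¬ p ∣ 2)
    (hm : m ≠ 0) (hn : 2 ≤ n) (h₁ : p ^ m = x ^ 2 + n * y ^ 2) (h₂ : p ^ m = z ^ 2 + n * w ^ 2)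
    (hx : ¬ p ∣ x) (hz : ¬ p ∣ z) : x ^ 2 = z ^ 2 := by
  have hP : p ^ m ≠ 0 := pow_ne_zero m hp.ne_zero
  have hprod : p ^ m ∣ (x * w - y * z) * (x * w + y * z) :=
    ⟨w ^ 2 - y ^ 2, by linear_combination -(w ^ 2) * h₁ + y ^ 2 * h₂⟩
  have hvanish : x * w - y * z = 0 ∨ x * w + y * z = 0 := by
    by_cases hdvd : p ∣ x * w - y * z
    · have hp' : ¬ p ∣ x * w + y * z := by
        intro hp'
        have h2xw : p ∣ 2 * (x * w) := by
          rw [show 2 * (x * w) = x * w - y * z + (x * w + y * z) by ring]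
          exact dvd_add hdvd hp'
        have hw : p ∣ w :=
          (hp.dvd_or_dvd ((hp.dvd_or_dvd h2xw).resolve_left hp2)).resolve_left hx
        have hzw : p ∣ z ^ 2 + n * w ^ 2 := h₂ ▸ dvd_pow_self p hm
        exact hz (hp.dvd_of_dvd_pow
          ((dvd_add_left (dvd_mul_of_dvd_right (hw.pow two_ne_zero) n)).1 hzw))
      left
      exact eq_zero_of_dvd_of_sq_eq hP hn (hp.pow_dvd_of_dvd_mul_right m hp' hprod)
        (E := x * z + n * y * w)
        (by linear_combination p ^ m * h₁ + (x ^ 2 + n * y ^ 2) * h₂)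
    · right
      exact eq_zero_of_dvd_of_sq_eq hP hn (hp.pow_dvd_of_dvd_mul_left m hdvd hprod)
        (E := x * z - n * y * w)
        (by linear_combination p ^ m * h₁ + (x ^ 2 + n * y ^ 2) * h₂)
  have hyw : p ^ m * (w ^ 2 - y ^ 2) = 0 := by
    rcases hvanish with h | h
    · linear_combination (x * w + y * z) * h + w ^ 2 * h₁ - y ^ 2 * h₂
    · linear_combination (x * w - y * z) * h + w ^ 2 * h₁ - y ^ 2 * h₂
  have := (mul_eq_zero.1 hyw).resolve_left hP
  linear_combination h₂ - h₁ + n * this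

lemma sq_eq_sq_of_prime_eq_sq_add {p n x y z w : ℤ} (hp : Prime p) (hp2 : ¬ p ∣ 2)
    (hpn : ¬ p ∣ n) (hn : 2 ≤ n) (h₁ : p = x ^ 2 + n * y ^ 2) (h₂ : p = z ^ 2 + n * w ^ 2) :
    x ^ 2 = z ^ 2 :=
  sq_eq_sq_of_prime_pow_eq_sq_add (m := 1) hp hp2 one_ne_zero hn (by rwa [pow_one])
    (by rwa [pow_one]) (not_dvd_of_prime_eq_sq_add hp hpn h₁) (not_dvd_of_prime_eq_sq_add hp hpn h₂)

section Zsqrtd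

variable {d : ℤ}

lemma im_dvd_im_pow (z : ℤ√d) (k : ℕ) : z.im ∣ (z ^ k).im := by
  induction k with
  | zero => simp
  | succ k ih =>
    rw [pow_succ, Zsqrtd.im_mul]
    exact dvd_add (dvd_mul_left _ _) (dvd_mul_of_dvd_left ih _)

lemma two_pow_mul_im_dvd_im_pow (z : ℤ√d) (s k : ℕ) : 2 ^ s * z.im ∣ (z ^ (2 ^ s * k)).im := by
  induction s with
  | zero => simpa using im_dvd_im_pow z k
  | succ s ih =>
    have hdouble : (z ^ (2 ^ (s + 1) * k)).im
        = 2 * (z ^ (2 ^ s * k)).im * (z ^ (2 ^ s * k)).re := by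
      rw [show 2 ^ (s + 1) * k = 2 ^ s * k + 2 ^ s * k by ring, pow_add, Zsqrtd.im_mul]
      ring
    rw [hdouble, pow_succ', mul_assoc 2]
    exact dvd_mul_of_dvd_left (mul_dvd_mul_left 2 ih) _

lemma re_pow_two_mul_add_one (z : ℤ√d) (n : ℕ) :
    (z ^ (2 * n + 1)).re = z.norm ^ n * z.re + 2 * d * (z ^ n).im * (z ^ (n + 1)).im := by
  have hnorm : z.norm ^ n = (z ^ n).norm := (map_pow Zsqrtd.normMonoidHom z n).symm
  rw [hnorm, Zsqrtd.norm_def, show z ^ (2 * n + 1) = z ^ n * (z ^ n * z) by ring, pow_succ]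
  simp only [Zsqrtd.re_mul, Zsqrtd.im_mul]
  ring

lemma re_dvd_re_pow_of_odd (z : ℤ√d) {m : ℕ} (hm : Odd m) : z.re ∣ (z ^ m).re := by
  have htrace (w : ℤ√d) : w + star w = ((2 * w.re : ℤ) : ℤ√d) := by ext <;> simp [two_mul]
  have hdvd := hm.add_dvd_pow_add_pow z (star z)
  rw [← star_pow, htrace, htrace, Zsqrtd.intCast_dvd_intCast] at hdvd
  exact (mul_dvd_mul_iff_left two_ne_zero).1 hdvd

/-- Modulo `p` the conjugate factor `z̄` kills `z`, so `z ^ (k + 1) ≡ (z + z̄) ^ k * z`. -/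
lemma not_dvd_re_pow_succ {p : ℤ} (hp : Prime p) {z : ℤ√d} (hz : p ∣ z.norm)
    (hre : ¬ p ∣ 2 * z.re) (k : ℕ) : ¬ p ∣ (z ^ (k + 1)).re := by
  intro hk
  have hdvd : (p : ℤ√d) ∣ z ^ (k + 1) - ((2 * z.re : ℤ) : ℤ√d) ^ k * z := by
    have hconj : z - ((2 * z.re : ℤ) : ℤ√d) = -star z := by
      refine Zsqrtd.ext ?_ (by simp)
      simp only [Zsqrtd.re_sub, Zsqrtd.re_intCast, Zsqrtd.re_neg, Zsqrtd.re_star]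
      ring
    have hp_dvd : (p : ℤ√d) ∣ (z - ((2 * z.re : ℤ) : ℤ√d)) * z := by
      rw [hconj, neg_mul, mul_comm, ← Zsqrtd.norm_eq_mul_conj, dvd_neg]
      exact (Zsqrtd.intCast_dvd_intCast _ _).2 hz
    rw [pow_succ, ← sub_mul]
    exact hp_dvd.trans (mul_dvd_mul_right (sub_dvd_pow_sub_pow _ _ k) z)
  have hp_re : p ∣ (2 * z.re) ^ k * z.re := by
    have := ((Zsqrtd.intCast_dvd _ _).1 hdvd).1
    rw [← Int.cast_pow, Zsqrtd.re_sub, Zsqrtd.re_smul] at this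
    exact (dvd_sub_right hk).1 this
  rcases hp.dvd_or_dvd hp_re with h | h
  · exact hre (hp.dvd_of_dvd_pow h)
  · exact hre (dvd_mul_of_dvd_right h 2)

lemma norm_sub_one_dvd_re_pow_sub_one {z : ℤ√d} (hz : z.re = 1) (k : ℕ) :
    z.norm - 1 ∣ (z ^ k).re - 1 := by
  have hnorm : z.norm - 1 = -(d * z.im ^ 2) := by
    rw [Zsqrtd.norm_def, hz]
    ring
  induction k with
  | zero => simp
  | succ k ih =>
    obtain ⟨c, hc⟩ := im_dvd_im_pow z k
    have hstep : (z ^ (k + 1)).re - 1 = (z ^ k).re - 1 - (z.norm - 1) * c := by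
      rw [pow_succ, Zsqrtd.re_mul, hc, hz, hnorm]
      ring
    rw [hstep]
    exact dvd_sub ih (dvd_mul_right _ c)

end Zsqrtd

lemma not_two_pow_succ_mul_sub_one_dvd {a : ℤ} (ha : 4 ∣ a - 1) (ha1 : a ≠ 1) (s : ℕ) {k : ℕ}
    (hk : Odd k) : ¬ 2 ^ (s + 1) * (a - 1) ∣ a ^ (2 ^ s * k) - 1 := by
  have htwo (n : ℕ) : emultiplicity (2 : ℤ) (2 ^ n) = n :=
    emultiplicity_pow_self_of_prime Int.prime_two n
  have hk2 : emultiplicity (2 : ℤ) k = 0 :=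
    emultiplicity_eq_zero.2 (mod_cast hk.not_two_dvd_nat)
  have hval : emultiplicity 2 (a ^ (2 ^ s * k) - 1) = emultiplicity 2 (a - 1) + s := by
    have := Int.two_pow_sub_pow' (x := a) (y := 1) (2 ^ s * k) ha (by omega)
    rw [one_pow] at this
    rw [this]
    push_cast
    rw [emultiplicity_mul Int.prime_two, hk2, htwo, add_zero]
  intro h
  have hle := emultiplicity_le_emultiplicity_of_dvd_right (a := 2) h
  have hfin : emultiplicity 2 (a - 1) ≠ ⊤ := finiteMultiplicity_iff_emultiplicity_ne_top.1
    (Int.finiteMultiplicity_iff.2 ⟨by norm_num, sub_ne_zero.2 ha1⟩)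
  rw [hval, emultiplicity_mul Int.prime_two, htwo, add_comm,
    ENat.add_le_add_iff_left hfin] at hle
  exact absurd hle (by exact_mod_cast Nat.not_succ_le_self s)

lemma re_pow_sq_ne_one {v : ℤ} (hv : Even v) (hv0 : v ≠ 0) {n : ℕ} (hn : n ≠ 0) :
    ((⟨1, v⟩ : ℤ√(-2)) ^ (2 * n + 1)).re ^ 2 ≠ 1 := by
  set z : ℤ√(-2) := ⟨1, v⟩
  have hnorm : z.norm = 1 + 2 * v ^ 2 := by
    simp only [z, Zsqrtd.norm_def]
    ring
  have h4 : 4 ∣ z.norm - 1 := by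
    rw [hnorm]
    obtain ⟨c, rfl⟩ := hv
    exact ⟨2 * c ^ 2, by ring⟩
  have hpos : 0 < v ^ 2 := by positivity
  intro hsq
  have hre : (z ^ (2 * n + 1)).re = 1 := by
    have := h4.trans (norm_sub_one_dvd_re_pow_sub_one (z := z) rfl (2 * n + 1))
    rcases sq_eq_one_iff.1 hsq with h | h <;> omega
  obtain ⟨s, k, hk, rfl⟩ := Nat.exists_eq_two_pow_mul_odd hn
  refine not_two_pow_succ_mul_sub_one_dvd h4 (by omega) s hk ?_
  obtain ⟨c, hc⟩ := two_pow_mul_im_dvd_im_pow z s k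
  obtain ⟨e, he⟩ := im_dvd_im_pow z (2 ^ s * k + 1)
  have hid := re_pow_two_mul_add_one z (2 ^ s * k)
  refine ⟨c * e, ?_⟩
  rw [hc, he, hre] at hid
  rw [hnorm] at hid ⊢
  simp only [z] at hid
  linear_combination -hid

lemma re_pow_sq_eq_one {p b : ℤ} {z : ℤ√(-2)} {m : ℕ} (hp : Prime p) (hp2 : ¬ p ∣ 2)
    (hz : z.norm = p) (hb : p ^ (m + 1) = 1 + 2 * b ^ 2) : (z ^ (m + 1)).re ^ 2 = 1 := by
  have hnorm (w : ℤ√(-2)) : w.norm = w.re ^ 2 + 2 * w.im ^ 2 := by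
    rw [Zsqrtd.norm_def]
    ring
  have hpow : p ^ (m + 1) = (z ^ (m + 1)).re ^ 2 + 2 * (z ^ (m + 1)).im ^ 2 := by
    rw [← hnorm, ← hz]
    exact (map_pow Zsqrtd.normMonoidHom z _).symm
  have hpre : ¬ p ∣ z.re := not_dvd_of_prime_eq_sq_add hp hp2 (hz.symm.trans (hnorm z))
  have hre : ¬ p ∣ (z ^ (m + 1)).re :=
    not_dvd_re_pow_succ hp (dvd_of_eq hz.symm) (hp.not_dvd_mul hp2 hpre) m
  have := sq_eq_sq_of_prime_pow_eq_sq_add hp hp2 m.succ_ne_zero le_rfl hpow (z := 1) (w := b)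
    (by rw [hb, one_pow]) hre hp.not_dvd_one
  rwa [one_pow] at this

/-- If `z = u + v√-2` has norm `p`, uniqueness of representations forces `re (z ^ (2n + 1)) = ±1`,
hence `u = ±1`, and a comparison of powers of `2` then excludes `n ≠ 0`. -/
lemma eq_zero_of_prime_pow_eq_one_add {p u v b : ℤ} {n : ℕ} (hp : Prime p) (h8 : p % 8 = 1)
    (huv : p = u ^ 2 + 2 * v ^ 2) (hb : p ^ (2 * n + 1) = 1 + 2 * b ^ 2) : n = 0 := by
  have hp2 : ¬ p ∣ 2 := fun h ↦ by
    have := Int.le_of_dvd two_pos h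
    have := hp.ne_one
    have : 0 ≤ p := huv ▸ by positivity
    omega
  have hsq {u : ℤ} (huv : p = u ^ 2 + 2 * v ^ 2) :
      ((⟨u, v⟩ : ℤ√(-2)) ^ (2 * n + 1)).re ^ 2 = 1 :=
    re_pow_sq_eq_one hp hp2 (by rw [Zsqrtd.norm_def]; linear_combination -huv) hb
  have hu : u ^ 2 = 1 := by
    have hunit : IsUnit (((⟨u, v⟩ : ℤ√(-2)) ^ (2 * n + 1)).re) :=
      IsUnit.of_pow_eq_one (hsq huv) two_ne_zero
    have hdvd := re_dvd_re_pow_of_odd (⟨u, v⟩ : ℤ√(-2)) (odd_two_mul_add_one n)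
    exact sq_eq_one_iff.2 (Int.isUnit_iff.1 (isUnit_of_dvd_unit hdvd hunit))
  have huv' : p = 1 ^ 2 + 2 * v ^ 2 := by rw [huv, hu, one_pow]
  have hv : Even v := by
    by_contra hv
    have := Int.sq_mod_four_eq_one_of_odd (Int.not_even_iff_odd.1 hv)
    omega
  have hv0 : v ≠ 0 := by
    rintro rfl
    exact hp.ne_one (by simpa using huv')
  by_contra hn
  exact re_pow_sq_ne_one hv hv0 hn (hsq huv')

lemma eq_zero_of_isPrimePow_mul_add_three {r : ℕ}
    (h : IsPrimePow ((2 * r + 1) * (2 * r + 3))) : r = 0 := by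
  have hcop : Nat.Coprime (2 * r + 1) (2 * r + 3) := by
    rw [show 2 * r + 3 = 2 * r + 1 + 2 by ring, Nat.coprime_self_add_right]
    exact (odd_two_mul_add_one r).coprime_two_right
  rcases (hcop.isPrimePow_dvd_mul h).1 dvd_rfl with h | h
  · have := Nat.le_of_dvd (by omega) h
    nlinarith
  · have := Nat.le_of_dvd (by omega) h
    nlinarith

/-- Write `b = 2c`, so that `(P - 1)(P + 1) = 8c²` and `P ≡ ±3 (mod 8)`; dividing by `8` gives a
square factored into coprime parts. -/
lemma eq_three_of_sq_eq_one_add {P b : ℕ} (hP : IsPrimePow P) (h16 : P ^ 2 % 16 = 9)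
    (hb : P ^ 2 = 1 + 2 * b ^ 2) : P = 3 := by
  have hP8 : P % 8 = 3 ∨ P % 8 = 5 := by
    have hlt : P % 16 < 16 := Nat.mod_lt _ (by norm_num)
    rw [Nat.pow_mod] at h16
    have hmod : P % 8 = P % 16 % 8 := by omega
    rw [hmod]
    generalize P % 16 = r at *
    interval_cases r <;> simp_all
  have hbeven : Even b := by
    by_contra hodd
    have := Nat.eight_dvd_sq_sub_one_of_odd (Nat.not_even_iff_odd.1 hodd)
    omega
  obtain ⟨c, rfl⟩ := hbeven.two_dvd
  rcases hP8 with h | h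
  · obtain ⟨t, rfl⟩ : ∃ t, P = 8 * t + 3 := ⟨P / 8, by omega⟩
    have hprod : (2 * t + 1) * (4 * t + 1) = c ^ 2 := by linarith
    have hcop : Nat.Coprime (2 * t + 1) (4 * t + 1) :=
      Nat.isCoprime_iff_coprime.1 ⟨2, -1, by push_cast; ring⟩
    obtain ⟨s, hs⟩ := exists_eq_pow_of_mul_eq_pow (Nat.isUnit_iff.2 hcop) hprod
    obtain ⟨r, rfl⟩ : ∃ r, s = r + 1 := Nat.exists_eq_add_one_of_ne_zero (by rintro rfl; omega)
    have hfac : 8 * t + 3 = (2 * r + 1) * (2 * r + 3) := by linarith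
    rw [hfac] at hP ⊢
    simp [eq_zero_of_isPrimePow_mul_add_three hP]
  · obtain ⟨t, rfl⟩ : ∃ t, P = 8 * t + 5 := ⟨P / 8, by omega⟩
    have hprod : (4 * t + 3) * (2 * t + 1) = c ^ 2 := by linarith
    have hcop : Nat.Coprime (4 * t + 3) (2 * t + 1) :=
      Nat.isCoprime_iff_coprime.1 ⟨1, -2, by push_cast; ring⟩
    obtain ⟨s, hs⟩ := exists_eq_pow_of_mul_eq_pow (Nat.isUnit_iff.2 hcop) hprod
    have hs4 : s ^ 2 % 4 = 3 := by omega
    rw [Nat.pow_mod] at hs4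
    have : s % 4 < 4 := Nat.mod_lt _ (by norm_num)
    interval_cases s % 4 <;> simp at hs4

lemma mod_eight_eq_one_of_pow {p n : ℕ} (h : p ^ (2 * n + 1) % 8 = 1) : p % 8 = 1 := by
  have hodd : p % 2 = 1 := by
    have hpow : Odd (p ^ (2 * n + 1)) := Nat.odd_iff.2 (by omega)
    exact Nat.odd_iff.1 ((Nat.odd_pow_iff (by omega)).1 hpow)
  have hsq : p ^ 2 % 8 = 1 := by
    have : p % 8 = 1 ∨ p % 8 = 3 ∨ p % 8 = 5 ∨ p % 8 = 7 := by omega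
    rcases this with h | h | h | h <;> rw [Nat.pow_mod, h]
  rwa [pow_succ, pow_mul, Nat.mul_mod, Nat.pow_mod, hsq, one_pow, Nat.one_mod, one_mul,
    Nat.mod_mod] at h

end Representations

section JacobiSum

/-! ### Jacobi sums -/

lemma mulChar_apply_eq_zero_or_pow_eq_one {M R : Type*} [CommMonoid M] [CommMonoidWithZero R]
    {χ : MulChar M R} {n : ℕ} (hn : n ≠ 0) (hχ : χ ^ n = 1) (t : M) : χ t = 0 ∨ χ t ^ n = 1 := by
  by_cases ht : IsUnit t
  · exact .inr (by rw [← MulChar.pow_apply' χ hn, hχ, MulChar.one_apply ht])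
  · exact .inl (χ.map_nonunit ht)

variable {F : Type*} [Field F] [Fintype F]

/-- Substitute `t ↦ t⁻¹` in `∑ ψ(t) χ(1 - t)`. -/
lemma jacobiSum_eq_mul_jacobiSum_inv_mul {R : Type*} [CommRing R] (χ ψ : MulChar F R) :
    jacobiSum χ ψ = χ (-1) * jacobiSum χ (χ * ψ)⁻¹ := by
  rw [jacobiSum_comm, jacobiSum_comm χ, jacobiSum, jacobiSum, Finset.mul_sum]
  refine Fintype.sum_equiv (Equiv.inv F) _ _ fun t ↦ ?_
  rcases eq_or_ne t 0 with rfl | ht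
  · simp [MulChar.map_zero]
  · have hsub : 1 - t = -1 * (t * (1 - t⁻¹)) := by
      field_simp
      ring
    rw [Equiv.inv_apply, hsub, map_mul, map_mul, MulChar.inv_apply', inv_inv, MulChar.mul_apply]
    ring

lemma jacobiSum_pow_pow_eq {R : Type*} [CommRing R] {χ : MulChar F R} {n : ℕ} (hχ : χ ^ n = 1)
    (i : ℕ) {j k : ℕ} (h : n ∣ i + j + k) :
    jacobiSum (χ ^ i) (χ ^ j) = χ (-1) ^ i * jacobiSum (χ ^ i) (χ ^ k) := by
  obtain ⟨c, hc⟩ := h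
  have hinv : (χ ^ i * χ ^ j)⁻¹ = χ ^ k := by
    rw [inv_eq_iff_mul_eq_one, ← pow_add, ← pow_add, hc, pow_mul, hχ, one_pow]
  have hneg : (χ ^ i) (-1) = χ (-1) ^ i := by
    simpa only [Units.val_neg, Units.val_one] using MulChar.pow_apply_coe χ i (-1)
  rw [jacobiSum_eq_mul_jacobiSum_inv_mul, hinv, hneg]

section QuadraticCharacter

variable {R : Type*} [CommRing R] {η : MulChar F R}

lemma ringChar_ne_two_of_mulChar_sq_eq_one {F R : Type*} [Field F] [Finite F] [CommRing R]
    {η : MulChar F R} (hη : η ≠ 1) (hη2 : η ^ 2 = 1) : ringChar F ≠ 2 := by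
  intro hF
  obtain ⟨u, hu⟩ := MulChar.ne_one_iff.1 hη
  obtain ⟨v, hv⟩ := FiniteField.isSquare_of_char_two hF (u : F)
  have hv0 : IsUnit v := isUnit_iff_ne_zero.2 (by rintro rfl; simp at hv)
  exact hu (by rw [hv, map_mul, ← sq, ← MulChar.pow_apply' η two_ne_zero, hη2,
    MulChar.one_apply hv0])

variable [IsDomain R]

lemma mulChar_apply_eq_quadraticChar [DecidableEq F] (hη : η ≠ 1) (hη2 : η ^ 2 = 1) (w : F) :
    η w = (quadraticChar F w : R) := by
  rcases eq_or_ne w 0 with rfl | hw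
  · simp [MulChar.map_zero]
  have hsquare {a : F} (ha : a ≠ 0) (h : quadraticChar F a = 1) : η a = 1 := by
    obtain ⟨s, rfl⟩ := (quadraticChar_one_iff_isSquare ha).1 h
    rw [map_mul, ← sq, ← MulChar.pow_apply' η two_ne_zero, hη2,
      MulChar.one_apply (isUnit_iff_ne_zero.2 (left_ne_zero_of_mul ha))]
  obtain ⟨u, hu⟩ := MulChar.ne_one_iff.1 hη
  have hu2 : η u ^ 2 = 1 := by
    rw [← MulChar.pow_apply' η two_ne_zero, hη2, MulChar.one_apply u.isUnit]
  have hηu : η u = -1 := (sq_eq_one_iff.1 hu2).resolve_left hu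
  have hqu : quadraticChar F u = -1 :=
    (quadraticChar_dichotomy u.ne_zero).resolve_left (hu ∘ hsquare u.ne_zero)
  rcases quadraticChar_dichotomy hw with h | h
  · rw [h, hsquare hw h, Int.cast_one]
  · have hwu : η (w * u) = 1 := hsquare (mul_ne_zero hw u.ne_zero) (by rw [map_mul, h, hqu]; rfl)
    rw [map_mul, hηu] at hwu
    rw [h]
    push_cast
    linear_combination -hwu

lemma sum_comp_sq_eq_sum_mul (hη : η ≠ 1) (hη2 : η ^ 2 = 1) (f : F → R) :
    ∑ s, f (s ^ 2) = ∑ w, (η w + 1) * f w := by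
  classical
  rw [← Finset.sum_fiberwise (s := Finset.univ) (g := fun s : F ↦ s ^ 2)]
  refine Finset.sum_congr rfl fun w _ ↦ ?_
  have hcard := quadraticChar_card_sqrts (ringChar_ne_two_of_mulChar_sq_eq_one hη hη2) w
  rw [Set.toFinset_ofPred] at hcard
  rw [Finset.sum_congr rfl fun s hs ↦ congrArg f (Finset.mem_filter.1 hs).2, Finset.sum_const,
    nsmul_eq_mul, mulChar_apply_eq_quadraticChar hη hη2]
  congr 1
  exact_mod_cast congrArg (Int.cast : ℤ → R) hcard

/-- Complete the square in `4t(1 - t) = 1 - (2t - 1)²`. -/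
lemma mul_jacobiSum_self (hη : η ≠ 1) (hη2 : η ^ 2 = 1) {ψ : MulChar F R} (hψ : ψ ≠ 1) :
    ψ 4 * jacobiSum ψ ψ = jacobiSum ψ η := by
  have h2 : (2 : F) ≠ 0 := Ring.two_ne_zero (ringChar_ne_two_of_mulChar_sq_eq_one hη hη2)
  let e : F ≃ F := (Equiv.mulLeft₀ 2 h2).trans (Equiv.subRight 1)
  calc ψ 4 * jacobiSum ψ ψ = ∑ t, ψ (1 - e t ^ 2) := by
        rw [jacobiSum, Finset.mul_sum]
        refine Finset.sum_congr rfl fun t _ ↦ ?_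
        rw [← map_mul, ← map_mul]
        congr 1
        simp only [e, Equiv.trans_apply, Equiv.mulLeft₀_apply, Equiv.subRight_apply]
        ring
    _ = ∑ w, (η w + 1) * ψ (1 - w) := by
        rw [e.sum_comp fun s ↦ ψ (1 - s ^ 2),
          sum_comp_sq_eq_sum_mul hη hη2 fun w ↦ ψ (1 - w)]
    _ = jacobiSum η ψ + ∑ w, ψ (1 - w) := by
        simp only [add_mul, one_mul, Finset.sum_add_distrib, jacobiSum]
    _ = jacobiSum ψ η := by
        have hsum : ∑ w, ψ (1 - w) = 0 :=
          ((Equiv.subLeft (1 : F)).sum_comp ψ).trans (MulChar.sum_eq_zero_of_ne_one hψ)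
        rw [hsum, add_zero, jacobiSum_comm]

end QuadraticCharacter

lemma ringChar_complex_ne_ringChar (F : Type*) [Field F] [Finite F] : ringChar ℂ ≠ ringChar F := by
  rw [ringChar.eq_zero]
  exact (CharP.ringChar_ne_zero_of_finite F).symm

lemma jacobiSum_mul_jacobiSum_assoc {χ ψ φ : MulChar F ℂ} (h₁ : χ * ψ ≠ 1) (h₂ : ψ * φ ≠ 1)
    (h₃ : χ * ψ * φ ≠ 1) :
    jacobiSum χ ψ * jacobiSum (χ * ψ) φ = jacobiSum ψ φ * jacobiSum χ (ψ * φ) := by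
  let e := AddChar.FiniteField.primitiveChar_to_Complex F
  have he : e.IsPrimitive := AddChar.FiniteField.primitiveChar_to_Complex_isPrimitive F
  have hF : (Fintype.card F : ℂ) ≠ 0 := Nat.cast_ne_zero.2 Fintype.card_ne_zero
  have h₃' : χ * (ψ * φ) ≠ 1 := by rwa [← mul_assoc]
  have g₁ := gaussSum_ne_zero_of_nontrivial hF h₁ he
  have g₂ := gaussSum_ne_zero_of_nontrivial hF h₂ he
  rw [jacobiSum_eq_gaussSum_mul_gaussSum_div_gaussSum hF h₁ he,
    jacobiSum_eq_gaussSum_mul_gaussSum_div_gaussSum hF h₂ he,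
    jacobiSum_eq_gaussSum_mul_gaussSum_div_gaussSum hF h₃ he,
    jacobiSum_eq_gaussSum_mul_gaussSum_div_gaussSum hF h₃' he, mul_assoc χ ψ φ]
  field_simp

/-- The Hasse–Davenport product formula for the prime `2`, in terms of Jacobi sums. -/
lemma jacobiSum_sq_eq_mul_jacobiSum_mul {η ψ : MulChar F ℂ} (hη : η ≠ 1) (hη2 : η ^ 2 = 1)
    (hψ2 : ψ ^ 2 ≠ 1) (hψη : ψ * η ≠ 1) (hψη2 : ψ ^ 2 * η ≠ 1) :
    jacobiSum (ψ ^ 2) η = ψ 4 * jacobiSum ψ (ψ * η) := by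
  have hψ : ψ ≠ 1 := by
    rintro rfl
    exact hψ2 (one_pow 2)
  rw [sq] at hψ2 hψη2 ⊢
  have hJ : jacobiSum ψ ψ ≠ 0 := by
    have := jacobiSum_mul_jacobiSum_inv (ringChar_complex_ne_ringChar F) hψ hψ hψ2
    exact left_ne_zero_of_mul (this.trans_ne (Nat.cast_ne_zero.2 Fintype.card_ne_zero))
  have hassoc := jacobiSum_mul_jacobiSum_assoc hψ2 hψη hψη2
  rw [← mul_jacobiSum_self hη hη2 hψ] at hassoc
  exact mul_left_cancel₀ hJ (by linear_combination hassoc)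

lemma star_jacobiSum (χ ψ : MulChar F ℂ) : star (jacobiSum χ ψ) = jacobiSum χ⁻¹ ψ⁻¹ := by
  simp only [jacobiSum, star_sum, star_mul', MulChar.star_apply']

lemma normSq_jacobiSum {χ ψ : MulChar F ℂ} (hχ : χ ≠ 1) (hψ : ψ ≠ 1) (hχψ : χ * ψ ≠ 1) :
    Complex.normSq (jacobiSum χ ψ) = Fintype.card F := by
  have hmul := jacobiSum_mul_jacobiSum_inv (ringChar_complex_ne_ringChar F) hχ hψ hχψ
  rw [← star_jacobiSum, Complex.star_def, Complex.mul_conj] at hmul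
  exact_mod_cast hmul

lemma pow_ne_one_of_orderOf_not_dvd {G : Type*} [Monoid G] {g : G} {n : ℕ} (h : ¬ orderOf g ∣ n) :
    g ^ n ≠ 1 := mt orderOf_dvd_of_pow_eq_one h

/-- The congruence `J ≡ -1 (mod (i - 1)²)` makes the imaginary part even. -/
lemma exists_jacobiSum_eq_of_orderOf_eq_four {ψ : MulChar F ℂ} (hψ : orderOf ψ = 4) :
    ∃ X Y : ℤ, jacobiSum ψ (ψ ^ 2) = X + 2 * Y * Complex.I ∧
      X ^ 2 + 4 * Y ^ 2 = Fintype.card F := by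
  have hψ4 : ψ ^ 4 = 1 := hψ ▸ pow_orderOf_eq_one ψ
  obtain ⟨z, hz, hJ⟩ := exists_jacobiSum_eq_neg_one_add (n := 4) (by norm_num) hψ4
    (show (ψ ^ 2) ^ 4 = 1 by rw [← pow_mul, mul_comm, pow_mul, hψ4, one_pow])
    (hψ ▸ ψ.orderOf_dvd_card_sub_one) Complex.isPrimitiveRoot_I
  obtain ⟨w, rfl⟩ : ∃ w : GaussianInt, GaussianInt.toComplex w = z := by
    have hle : Algebra.adjoin ℤ {Complex.I} ≤ GaussianInt.toComplex.toIntAlgHom.range :=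
      Algebra.adjoin_le (Set.singleton_subset_iff.2 ⟨⟨0, 1⟩, by simp [GaussianInt.toComplex_def]⟩)
    exact hle hz
  have hXY : jacobiSum ψ (ψ ^ 2) =
      ((2 * w.im - 1 : ℤ) : ℂ) + 2 * ((-w.re : ℤ) : ℂ) * Complex.I := by
    rw [hJ, GaussianInt.toComplex_def]
    push_cast
    linear_combination (w.re + w.im * Complex.I - 2 * w.im) * Complex.I_sq
  have hnorm := normSq_jacobiSum (χ := ψ) (ψ := ψ ^ 2)
    (by simpa using pow_ne_one_of_orderOf_not_dvd (g := ψ) (n := 1) (by rw [hψ]; norm_num))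
    (pow_ne_one_of_orderOf_not_dvd (by rw [hψ]; norm_num))
    (by rw [← pow_succ']; exact pow_ne_one_of_orderOf_not_dvd (by rw [hψ]; norm_num))
  refine ⟨_, _, hXY, ?_⟩
  rw [hXY, show ∀ X Y : ℤ, (X + 2 * Y * Complex.I : ℂ) = (X : ℝ) + (2 * Y : ℝ) * Complex.I by
    intros; push_cast; ring, Complex.normSq_add_mul_I] at hnorm
  have hnorm' : (2 * w.im - 1) ^ 2 + (2 * -w.re) ^ 2 = (Fintype.card F : ℤ) := by
    exact_mod_cast hnorm
  rw [← hnorm']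
  ring

lemma add_pow_three_mem_range_lift {R : Type*} [CommRing R] [IsDomain R]
    (r : {r : R // r * r = ((-2 : ℤ) : R)}) {w : R} (hw : w = 0 ∨ w ^ 8 = 1) :
    w + w ^ 3 ∈ (Zsqrtd.lift r).range := by
  rcases hw with rfl | hw
  · simp
  have hfactor : (w ^ 2 - 1) * ((w ^ 2 + 1) * (w ^ 4 + 1)) = 0 := by linear_combination hw
  rcases mul_eq_zero.1 hfactor with h | h
  · have hw2 : w ^ 2 = 1 := sub_eq_zero.1 h
    rcases sq_eq_one_iff.1 hw2 with rfl | rfl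
    · exact ⟨2, by norm_num⟩
    · exact ⟨-2, by norm_num⟩
  rcases mul_eq_zero.1 h with h | h
  · exact ⟨0, by rw [map_zero]; linear_combination -w * h⟩
  · have hsq : (w + w ^ 3) ^ 2 = r.1 ^ 2 := by
      have := r.2
      push_cast at this
      linear_combination (w ^ 2 + 2) * h - this
    rcases sq_eq_sq_iff_eq_or_eq_neg.1 hsq with h | h
    · exact ⟨⟨0, 1⟩, by simp [h]⟩
    · exact ⟨⟨0, -1⟩, by simp [h]⟩

lemma two_mul_jacobiSum_mem_range_lift {R : Type*} [CommRing R] [IsDomain R]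
    (r : {r : R // r * r = ((-2 : ℤ) : R)}) {χ : MulChar F R} (hχ : χ ^ 8 = 1)
    (h : jacobiSum (χ ^ 3) (χ ^ 4) = jacobiSum χ (χ ^ 4)) :
    2 * jacobiSum χ (χ ^ 4) ∈ (Zsqrtd.lift r).range := by
  have hsum : 2 * jacobiSum χ (χ ^ 4) = ∑ t, (χ t + χ t ^ 3) * (χ ^ 4) (1 - t) := by
    rw [two_mul]
    nth_rw 2 [← h]
    simp only [jacobiSum, ← Finset.sum_add_distrib, MulChar.pow_apply' χ three_ne_zero, add_mul]
  rw [hsum]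
  refine sum_mem fun t _ ↦ mul_mem
    (add_pow_three_mem_range_lift r (mulChar_apply_eq_zero_or_pow_eq_one (by norm_num) hχ t)) ?_
  rcases mulChar_apply_eq_zero_or_pow_eq_one two_ne_zero
    (show (χ ^ 4) ^ 2 = 1 by rw [← pow_mul, hχ]) (1 - t) with h0 | h1
  · exact h0 ▸ zero_mem _
  · rcases sq_eq_one_iff.1 h1 with h1 | h1 <;> rw [h1]
    · exact one_mem _
    · exact neg_mem (one_mem _)

lemma jacobiSum_pow_three_pow_four {R : Type*} [CommRing R] {χ : MulChar F R} (hχ : χ ^ 8 = 1) :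
    jacobiSum (χ ^ 3) (χ ^ 4) = jacobiSum χ (χ ^ 4) := by
  have hneg : χ (-1) ^ 4 = 1 := by
    rw [← map_pow, show (-1 : F) ^ 4 = 1 by norm_num, map_one]
  rw [jacobiSum_comm, jacobiSum_pow_pow_eq hχ 4 (k := 1) ⟨1, rfl⟩, hneg, one_mul, pow_one,
    jacobiSum_comm]

/-- Since `J(χ, χ⁴) = J(χ³, χ⁴)`, the sum is fixed by the automorphism `ζ ↦ ζ³` of `ℚ(ζ₈)`, whose
fixed field is `ℚ(√-2)`. -/
lemma exists_jacobiSum_eq_of_orderOf_eq_eight {χ : MulChar F ℂ} (hχ : orderOf χ = 8) :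
    ∃ A B : ℤ, jacobiSum χ (χ ^ 4) = A + B * (√2 * Complex.I) ∧
      A ^ 2 + 2 * B ^ 2 = Fintype.card F := by
  have hχ8 : χ ^ 8 = 1 := hχ ▸ pow_orderOf_eq_one χ
  have hsqrt : ((√2 : ℝ) : ℂ) ^ 2 = 2 := by exact_mod_cast Real.sq_sqrt (zero_le_two)
  let r : {r : ℂ // r * r = ((-2 : ℤ) : ℂ)} := ⟨√2 * Complex.I, by
    push_cast
    linear_combination Complex.I ^ 2 * hsqrt + 2 * Complex.I_sq⟩
  obtain ⟨⟨U, V⟩, hUV⟩ := two_mul_jacobiSum_mem_range_lift r hχ8 (jacobiSum_pow_three_pow_four hχ8)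
  replace hUV : (U : ℂ) + V * (√2 * Complex.I) = 2 * jacobiSum χ (χ ^ 4) := hUV
  have hnorm := normSq_jacobiSum (χ := χ) (ψ := χ ^ 4)
    (by simpa using pow_ne_one_of_orderOf_not_dvd (g := χ) (n := 1) (by rw [hχ]; norm_num))
    (pow_ne_one_of_orderOf_not_dvd (by rw [hχ]; norm_num))
    (by rw [← pow_succ']; exact pow_ne_one_of_orderOf_not_dvd (by rw [hχ]; norm_num))
  have hUVq : U ^ 2 + 2 * V ^ 2 = 4 * (Fintype.card F : ℤ) := by
    have h := congrArg Complex.normSq hUV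
    rw [show (U : ℂ) + V * (√2 * Complex.I) = (U : ℝ) + (V * √2 : ℝ) * Complex.I by
      push_cast; ring, Complex.normSq_add_mul_I, map_mul, hnorm, mul_pow,
      Real.sq_sqrt zero_le_two, Complex.normSq_ofNat] at h
    have : (U ^ 2 + 2 * V ^ 2 : ℝ) = 4 * Fintype.card F := by linarith
    exact_mod_cast this
  obtain ⟨A, rfl⟩ : (2 : ℤ) ∣ U := Int.prime_two.dvd_of_dvd_pow (n := 2) (by omega)
  obtain ⟨B, rfl⟩ : (2 : ℤ) ∣ V := by
    rw [mul_pow] at hUVq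
    exact Int.prime_two.dvd_of_dvd_pow (n := 2) (by omega)
  refine ⟨A, B, ?_, by linarith⟩
  push_cast at hUV
  linear_combination -hUV / 2

end JacobiSum

section CyclotomicNumbers

/-! ### Cyclotomic numbers -/

variable {F R : Type*} [Field F] [CommRing R]

open Classical in
lemma sum_mulChar_pow_apply [IsDomain R] {χ : MulChar F R} {n : ℕ} (hχ : χ ^ n = 1) (t : F) :
    ∑ j ∈ Finset.range n, (χ ^ j) t = if χ t = 1 then (n : R) else 0 := by
  rcases eq_or_ne t 0 with rfl | ht
  · simp [MulChar.map_zero]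
  have hpow (j : ℕ) : (χ ^ j) t = χ t ^ j := MulChar.pow_apply_coe χ j (Units.mk0 t ht)
  have hroot : χ t ^ n = 1 := by
    rw [← hpow, hχ, MulChar.one_apply (isUnit_iff_ne_zero.2 ht)]
  simp only [hpow]
  split_ifs with h
  · simp [h]
  · have hgeom := geom_sum_mul (χ t) n
    rw [hroot, sub_self] at hgeom
    exact (mul_eq_zero.1 hgeom).resolve_right (sub_ne_zero.2 h)

variable [Fintype F]

open Classical in
/-- The number of `t` with `χ(t) = 1` and `χ(1 - t) = w`. If `χ` has order `e` and sends the
primitive element `α` to `ζ`, then for `w = ζ ^ k` this is the cyclotomic number counting the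
`t ∈ C_0^e` with `1 - t ∈ C_k^e`. -/
noncomputable def cyclotomicNumber (χ : MulChar F R) (w : R) : ℕ :=
  #{t | χ t = 1 ∧ χ (1 - t) = w}

lemma cyclotomicNumber_neg_one_mul [Nontrivial R] (χ : MulChar F R) (w : R) :
    cyclotomicNumber χ (χ (-1) * w) = cyclotomicNumber χ w := by
  have hneg : χ (-1) * χ (-1) = 1 := by rw [← map_mul, neg_one_mul, neg_neg, map_one]
  refine (Finset.card_equiv (Equiv.inv F) fun t ↦ ?_).symm
  simp only [Finset.mem_filter_univ, Equiv.inv_apply]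
  rcases eq_or_ne t 0 with rfl | ht
  · simp [MulChar.map_zero]
  have hinv : χ t * χ t⁻¹ = 1 := by rw [← map_mul, mul_inv_cancel₀ ht, map_one]
  have hsub : χ (1 - t) = χ (-1) * (χ t * χ (1 - t⁻¹)) := by
    rw [← map_mul, ← map_mul]
    congr 1
    field_simp
    ring
  constructor
  · rintro ⟨h, rfl⟩
    rw [h, one_mul] at hinv hsub
    exact ⟨hinv, by rw [hsub, ← mul_assoc, hneg, one_mul]⟩
  · rintro ⟨h, hw⟩
    rw [h, mul_one] at hinv
    exact ⟨hinv, by rw [hsub, hinv, one_mul, hw, ← mul_assoc, hneg, one_mul]⟩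

variable [IsDomain R] {χ : MulChar F R} {n : ℕ}

open Classical in
lemma mulChar_pow_apply_eq_sum_ite {F R : Type*} [Field F] [Finite F] [CommRing R] [IsDomain R]
    {χ : MulChar F R} {n : ℕ} (hχ : χ ^ n = 1) {ζ : R} (hζ : IsPrimitiveRoot ζ n) (hn : n ≠ 0)
    (i : ℕ) (u : F) :
    (χ ^ i) u = ∑ k ∈ Finset.range n, if χ u = ζ ^ k then ζ ^ (k * i) else 0 := by
  have : NeZero n := ⟨hn⟩
  rcases eq_or_ne u 0 with rfl | hu
  · simp [MulChar.map_zero, (pow_ne_zero _ (hζ.ne_zero hn)).symm]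
  obtain ⟨k, hk, hχk⟩ := MulChar.exists_apply_eq_pow hχ hζ hu
  rw [Finset.sum_eq_single_of_mem k (Finset.mem_range.2 hk), if_pos hχk, pow_mul, ← hχk]
  · exact MulChar.pow_apply_coe χ i (Units.mk0 u hu)
  · intro l hl hlk
    exact if_neg fun h ↦ hlk (hζ.pow_inj (Finset.mem_range.1 hl) hk (h.symm.trans hχk))

lemma sum_jacobiSum_pow_eq (hχ : χ ^ n = 1) {ζ : R} (hζ : IsPrimitiveRoot ζ n) (hn : n ≠ 0)
    (i : ℕ) :
    ∑ j ∈ Finset.range n, jacobiSum (χ ^ j) (χ ^ i) =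
      n * ∑ k ∈ Finset.range n, cyclotomicNumber χ (ζ ^ k) * ζ ^ (k * i) := by
  classical
  calc ∑ j ∈ Finset.range n, jacobiSum (χ ^ j) (χ ^ i)
      = ∑ t, (∑ j ∈ Finset.range n, (χ ^ j) t) * (χ ^ i) (1 - t) := by
        simp only [jacobiSum, Finset.sum_mul]
        exact Finset.sum_comm
    _ = n * ∑ t with χ t = 1, (χ ^ i) (1 - t) := by
        simp only [sum_mulChar_pow_apply hχ, ite_mul, zero_mul, Finset.sum_filter,
          Finset.mul_sum, mul_ite, mul_zero]
    _ = n * ∑ k ∈ Finset.range n, cyclotomicNumber χ (ζ ^ k) * ζ ^ (k * i) := by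
        simp only [mulChar_pow_apply_eq_sum_ite hχ hζ hn i]
        rw [Finset.sum_comm]
        simp only [← Finset.sum_filter, Finset.filter_filter, Finset.sum_const, nsmul_eq_mul,
          cyclotomicNumber]

lemma sum_jacobiSum_pow_one (hχ : orderOf χ = n) (hn : n ≠ 0) :
    ∑ j ∈ Finset.range n, jacobiSum (χ ^ j) 1 = (Fintype.card F : R) - n - 1 := by
  obtain ⟨k, rfl⟩ := Nat.exists_eq_succ_of_ne_zero hn
  have hterm : ∀ j ∈ Finset.range k, jacobiSum (χ ^ (j + 1)) 1 = -1 := fun j hj ↦ by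
    have hj' : ¬ orderOf χ ∣ j + 1 := fun h ↦ by
      have := Nat.le_of_dvd j.succ_pos h
      have := Finset.mem_range.1 hj
      omega
    rw [jacobiSum_comm]
    exact jacobiSum_one_nontrivial (pow_ne_one_of_orderOf_not_dvd hj')
  rw [Finset.sum_range_succ', Finset.sum_congr rfl hterm, pow_zero, jacobiSum_one_one]
  simp only [Finset.sum_const, Finset.card_range, nsmul_eq_mul]
  push_cast
  ring

section OrderEight

variable {χ : MulChar F ℂ}

lemma jacobiSum_pow_seven_pow_four (hχ : χ ^ 8 = 1) :
    jacobiSum (χ ^ 7) (χ ^ 4) = star (jacobiSum χ (χ ^ 4)) := by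
  rw [star_jacobiSum, inv_eq_of_mul_eq_one_right (b := χ ^ 7) (by rw [← pow_succ', hχ]),
    inv_eq_of_mul_eq_one_right (b := χ ^ 4) (by rw [← pow_add, hχ])]

lemma mulChar_pow_apply_four {F R : Type*} [Field F] [CommRing R] [Nontrivial R] {χ : MulChar F R}
    (h2 : χ 2 ^ 2 = 1) (k : ℕ) : (χ ^ k) 4 = 1 := by
  have h4 : χ 4 = 1 := by rw [← h2, ← map_pow]; norm_num
  obtain ⟨u, hu⟩ : IsUnit (4 : F) := by
    by_contra h
    exact one_ne_zero (h4.symm.trans (χ.map_nonunit h))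
  rw [← hu, MulChar.pow_apply_coe, hu, h4, one_pow]

lemma jacobiSum_self_sq_eq_neg (hχ : orderOf χ = 8) (hneg : χ (-1) = -1) (h2 : χ 2 ^ 2 = 1) :
    jacobiSum χ (χ ^ 2) = -jacobiSum (χ ^ 2) (χ ^ 4) := by
  have hχ8 : χ ^ 8 = 1 := hχ ▸ pow_orderOf_eq_one χ
  have hne {k : ℕ} (h : ¬ 8 ∣ k) : χ ^ k ≠ 1 := pow_ne_one_of_orderOf_not_dvd (hχ ▸ h)
  have hHD := jacobiSum_sq_eq_mul_jacobiSum_mul (ψ := χ ^ 1) (hne (k := 4) (by norm_num))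
    (by rw [← pow_mul, hχ8]) (by rw [← pow_mul]; exact hne (by norm_num))
    (by rw [← pow_add]; exact hne (by norm_num))
    (by rw [← pow_mul, ← pow_add]; exact hne (by norm_num))
  rw [mulChar_pow_apply_four h2, one_mul, ← pow_mul, ← pow_add] at hHD
  rw [← pow_one χ, ← pow_mul, ← pow_mul, jacobiSum_pow_pow_eq hχ8 1 (k := 5) ⟨1, rfl⟩, hneg, hHD,
    pow_one (-1 : ℂ), neg_one_mul]

lemma sum_jacobiSum_pow_sq (hχ : orderOf χ = 8) (hneg : χ (-1) = -1) (h2 : χ 2 ^ 2 = 1) :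
    ∑ j ∈ Finset.range 8, jacobiSum (χ ^ j) (χ ^ 2) =
      -2 - (jacobiSum χ (χ ^ 4) + star (jacobiSum χ (χ ^ 4))) := by
  have hχ8 : χ ^ 8 = 1 := hχ ▸ pow_orderOf_eq_one χ
  have hne {k : ℕ} (h : ¬ 8 ∣ k) : χ ^ k ≠ 1 := pow_ne_one_of_orderOf_not_dvd (hχ ▸ h)
  have hη : χ ^ 4 ≠ 1 := hne (by norm_num)
  have hη2 : (χ ^ 4) ^ 2 = 1 := by rw [← pow_mul, hχ8]
  have hself {k : ℕ} (hk : ¬ 8 ∣ k) : jacobiSum (χ ^ k) (χ ^ k) = jacobiSum (χ ^ k) (χ ^ 4) := by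
    rw [← mul_jacobiSum_self hη hη2 (hne hk), mulChar_pow_apply_four h2, one_mul]
  have h₀ : jacobiSum (χ ^ 0) (χ ^ 2) = -1 := by
    rw [pow_zero, jacobiSum_one_nontrivial (hne (by norm_num))]
  have h₁ : jacobiSum (χ ^ 1) (χ ^ 2) = -jacobiSum (χ ^ 2) (χ ^ 4) := by
    rw [pow_one, jacobiSum_self_sq_eq_neg hχ hneg h2]
  have h₂ : jacobiSum (χ ^ 2) (χ ^ 2) = jacobiSum (χ ^ 2) (χ ^ 4) := hself (by norm_num)
  have h₃ : jacobiSum (χ ^ 3) (χ ^ 2) = -jacobiSum χ (χ ^ 4) := by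
    rw [jacobiSum_pow_pow_eq hχ8 3 (k := 3) ⟨1, rfl⟩, hself (by norm_num),
      jacobiSum_pow_three_pow_four hχ8, hneg]
    ring
  have h₅ : jacobiSum (χ ^ 5) (χ ^ 2) = -jacobiSum (χ ^ 2) (χ ^ 4) := by
    rw [← h₁, jacobiSum_comm, jacobiSum_pow_pow_eq hχ8 2 (k := 1) ⟨1, rfl⟩, hneg, neg_one_sq,
      one_mul, jacobiSum_comm]
  have h₆ : jacobiSum (χ ^ 6) (χ ^ 2) = -1 := by
    rw [jacobiSum_pow_pow_eq hχ8 6 (k := 0) ⟨1, rfl⟩, jacobiSum_comm, pow_zero,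
      jacobiSum_one_nontrivial (hne (by norm_num)), hneg]
    norm_num
  have h₇ : jacobiSum (χ ^ 7) (χ ^ 2) = -star (jacobiSum χ (χ ^ 4)) := by
    rw [jacobiSum_pow_pow_eq hχ8 7 (k := 7) ⟨2, rfl⟩, hself (by norm_num),
      jacobiSum_pow_seven_pow_four hχ8, hneg]
    ring
  simp only [Finset.sum_range_succ, Finset.sum_range_zero]
  rw [h₀, h₁, h₂, h₃, jacobiSum_comm (χ ^ 4), h₅, h₆, h₇]
  ring

lemma sum_jacobiSum_pow_four (hχ : orderOf χ = 8) :
    ∑ j ∈ Finset.range 8, jacobiSum (χ ^ j) (χ ^ 4) =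
      -2 + 2 * (jacobiSum χ (χ ^ 4) + star (jacobiSum χ (χ ^ 4))) +
        (jacobiSum (χ ^ 2) (χ ^ 4) + star (jacobiSum (χ ^ 2) (χ ^ 4))) := by
  have hχ8 : χ ^ 8 = 1 := hχ ▸ pow_orderOf_eq_one χ
  have hη : χ ^ 4 ≠ 1 := pow_ne_one_of_orderOf_not_dvd (by rw [hχ]; norm_num)
  have hneg : χ (-1) ^ 4 = 1 := by
    rw [← map_pow, show (-1 : F) ^ 4 = 1 by norm_num, map_one]
  have h₄ : jacobiSum (χ ^ 4) (χ ^ 4) = -1 := by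
    rw [jacobiSum_pow_pow_eq hχ8 4 (k := 0) ⟨1, rfl⟩, hneg, one_mul, jacobiSum_comm, pow_zero,
      jacobiSum_one_nontrivial hη]
  have h₅ : jacobiSum (χ ^ 5) (χ ^ 4) = star (jacobiSum χ (χ ^ 4)) := by
    rw [jacobiSum_comm, jacobiSum_pow_pow_eq hχ8 4 (k := 7) ⟨2, rfl⟩, hneg, one_mul,
      jacobiSum_comm, jacobiSum_pow_seven_pow_four hχ8]
  have h₆ : jacobiSum (χ ^ 6) (χ ^ 4) = star (jacobiSum (χ ^ 2) (χ ^ 4)) := by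
    rw [star_jacobiSum, inv_eq_of_mul_eq_one_right (b := χ ^ 6) (by rw [← pow_add, hχ8]),
      inv_eq_of_mul_eq_one_right (b := χ ^ 4) (by rw [← pow_add, hχ8])]
  simp only [Finset.sum_range_succ, Finset.sum_range_zero]
  rw [pow_zero, jacobiSum_one_nontrivial hη, pow_one, jacobiSum_pow_three_pow_four hχ8, h₄, h₅, h₆,
    jacobiSum_pow_seven_pow_four hχ8]
  ring

variable {ζ : ℂ}

lemma pow_four_eq_neg_one {R : Type*} [CommRing R] [IsDomain R] {ζ : R}
    (hζ : IsPrimitiveRoot ζ 8) : ζ ^ 4 = -1 :=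
  (hζ.pow (by norm_num) (by norm_num : 8 = 4 * 2)).eq_neg_one_of_two_right

lemma cyclotomicNumber_pow_add_four (hneg : χ (-1) = -1) (hζ : IsPrimitiveRoot ζ 8) (k : ℕ) :
    cyclotomicNumber χ (ζ ^ (k + 4)) = cyclotomicNumber χ (ζ ^ k) := by
  have hζ4 := pow_four_eq_neg_one hζ
  rw [← cyclotomicNumber_neg_one_mul χ (ζ ^ k), hneg, pow_add, hζ4, mul_comm]

lemma sum_jacobiSum_pow_two_mul_eq (hχ : orderOf χ = 8) (hneg : χ (-1) = -1)
    (hζ : IsPrimitiveRoot ζ 8) (i : ℕ) :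
    ∑ j ∈ Finset.range 8, jacobiSum (χ ^ j) (χ ^ (2 * i)) =
      16 * ∑ k ∈ Finset.range 4, cyclotomicNumber χ (ζ ^ k) * ζ ^ (k * (2 * i)) := by
  have hterm (k : ℕ) : (cyclotomicNumber χ (ζ ^ (4 + k)) * ζ ^ ((4 + k) * (2 * i)) : ℂ) =
      cyclotomicNumber χ (ζ ^ k) * ζ ^ (k * (2 * i)) := by
    rw [add_comm, cyclotomicNumber_pow_add_four hneg hζ,
      show (k + 4) * (2 * i) = k * (2 * i) + 8 * i by ring, pow_add, pow_mul ζ 8, hζ.pow_eq_one,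
      one_pow, mul_one]
  rw [sum_jacobiSum_pow_eq (hχ ▸ pow_orderOf_eq_one χ) hζ (by norm_num),
    Finset.sum_range_add _ 4 4, Finset.sum_congr rfl fun k _ ↦ hterm k]
  push_cast
  ring

lemma eq_zero_of_add_mul_eq_zero {i : ℂ} (hi : i ^ 2 = -1) {a b : ℤ} (h : (a + b * i : ℂ) = 0) :
    a = 0 ∧ b = 0 := by
  have hsq : a ^ 2 + b ^ 2 = 0 := by
    have : (a ^ 2 + b ^ 2 : ℂ) = 0 := by linear_combination (a - b * i) * h + b ^ 2 * hi
    exact_mod_cast this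
  constructor <;> nlinarith [sq_nonneg a, sq_nonneg b]

lemma sum_cyclotomicNumber_order_eight (hχ : orderOf χ = 8) (hneg : χ (-1) = -1)
    (hζ : IsPrimitiveRoot ζ 8) :
    16 * ∑ k ∈ Finset.range 4, (cyclotomicNumber χ (ζ ^ k) : ℤ) = Fintype.card F - 9 := by
  have h := sum_jacobiSum_pow_two_mul_eq hχ hneg hζ 0
  rw [mul_zero, pow_zero, sum_jacobiSum_pow_one hχ (by norm_num)] at h
  simp only [mul_zero, pow_zero, mul_one] at h
  have : 16 * ∑ k ∈ Finset.range 4, (cyclotomicNumber χ (ζ ^ k) : ℂ) = Fintype.card F - 9 := by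
    rw [← h]
    norm_num [sub_sub]
  exact_mod_cast this

lemma cyclotomicNumber_order_eight_sub (hχ : orderOf χ = 8) (hneg : χ (-1) = -1)
    (h2 : χ 2 ^ 2 = 1) (hζ : IsPrimitiveRoot ζ 8) {A : ℤ}
    (hA : (jacobiSum χ (χ ^ 4)).re = (A : ℝ)) :
    8 * ((cyclotomicNumber χ (ζ ^ 0) : ℤ) - cyclotomicNumber χ (ζ ^ 2)) = -1 - A ∧
      cyclotomicNumber χ (ζ ^ 1) = cyclotomicNumber χ (ζ ^ 3) := by
  have hζ4 : (ζ ^ 2) ^ 2 = -1 := by rw [← pow_mul, pow_four_eq_neg_one hζ]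
  have h := sum_jacobiSum_pow_two_mul_eq hχ hneg hζ 1
  rw [mul_one, sum_jacobiSum_pow_sq hχ hneg h2, Complex.star_def, Complex.add_conj, hA] at h
  simp only [Finset.sum_range_succ, Finset.sum_range_zero] at h
  obtain ⟨hre, him⟩ := eq_zero_of_add_mul_eq_zero hζ4
    (a := 8 * ((cyclotomicNumber χ (ζ ^ 0) : ℤ) - cyclotomicNumber χ (ζ ^ 2)) + 1 + A)
    (b := 8 * ((cyclotomicNumber χ (ζ ^ 1) : ℤ) - cyclotomicNumber χ (ζ ^ 3))) (by
      push_cast at h ⊢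
      linear_combination -h / 2 - 8 * (cyclotomicNumber χ (ζ ^ 2) +
        ζ ^ 2 * cyclotomicNumber χ (ζ ^ 3)) * hζ4)
  omega

lemma cyclotomicNumber_order_eight_alternating_sum (hχ : orderOf χ = 8) (hneg : χ (-1) = -1)
    (hζ : IsPrimitiveRoot ζ 8) {A X : ℤ} (hA : (jacobiSum χ (χ ^ 4)).re = (A : ℝ))
    (hX : (jacobiSum (χ ^ 2) (χ ^ 4)).re = (X : ℝ)) :
    8 * ∑ k ∈ Finset.range 4, (-1) ^ k * (cyclotomicNumber χ (ζ ^ k) : ℤ) = X - 1 + 2 * A := by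
  have hζ4 := pow_four_eq_neg_one hζ
  have h := sum_jacobiSum_pow_two_mul_eq hχ hneg hζ 2
  rw [show 2 * 2 = 4 from rfl, sum_jacobiSum_pow_four hχ, Complex.star_def, Complex.add_conj,
    Complex.add_conj, hA, hX] at h
  simp only [mul_comm _ 4, pow_mul, hζ4, mul_comm _ ((-1 : ℂ) ^ _)] at h
  have : 8 * ∑ k ∈ Finset.range 4, (-1) ^ k * (cyclotomicNumber χ (ζ ^ k) : ℂ) =
      X - 1 + 2 * A := by
    push_cast at h
    linear_combination -h / 2
  exact_mod_cast this

end OrderEight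

end CyclotomicNumbers

section CyclotomicClasses

/-! ### Cyclotomic classes as level sets of characters -/

variable {F : Type*} [Field F] {α : F}

namespace IsPrimitiveElt

lemma isPrimitiveRoot_apply {R : Type*} [CommRing R] (hα : IsPrimitiveElt α) (hα0 : α ≠ 0)
    (χ : MulChar F R) : IsPrimitiveRoot (χ α) (orderOf χ) := by
  have hpow (l : ℕ) : (χ ^ l) α = χ α ^ l := MulChar.pow_apply_coe χ l (Units.mk0 α hα0)
  refine ⟨by rw [← hpow, pow_orderOf_eq_one, MulChar.one_apply (isUnit_iff_ne_zero.2 hα0)],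
    fun l hl ↦ orderOf_dvd_of_pow_eq_one (MulChar.ext fun u ↦ ?_)⟩
  obtain ⟨n, hn⟩ := hα u u.ne_zero
  rw [MulChar.one_apply_coe, ← hn, map_pow, hpow, hl, one_pow]

variable [Fintype F]

lemma ne_zero (hα : IsPrimitiveElt α) (hF : 2 < Fintype.card F) : α ≠ 0 := by
  classical
  rintro rfl
  obtain ⟨y, hy⟩ := Finset.exists_mem_notMem_of_card_lt_card (s := {0, 1}) (t := Finset.univ)
    ((Finset.card_le_two (a := (0 : F)) (b := 1)).trans_lt hF)
  simp only [Finset.mem_univ, Finset.mem_insert, Finset.mem_singleton, not_or, true_and] at hy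
  obtain ⟨n, hn⟩ := hα y hy.1
  rw [zero_pow_eq] at hn
  split_ifs at hn
  exacts [hy.2 hn.symm, hy.1 hn.symm]

lemma exists_lt_pow_eq (hα : IsPrimitiveElt α) (hα0 : α ≠ 0) {x : F} (hx : x ≠ 0) :
    ∃ n < Fintype.card F, α ^ n = x := by
  obtain ⟨n, rfl⟩ := hα x hx
  have hF : 0 < Fintype.card F - 1 := Nat.sub_pos_of_lt Fintype.one_lt_card
  refine ⟨n % (Fintype.card F - 1), (Nat.mod_lt n hF).trans_le (Nat.sub_le _ 1), ?_⟩
  conv_rhs => rw [← Nat.div_add_mod n (Fintype.card F - 1), pow_add, pow_mul,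
    FiniteField.pow_card_sub_one_eq_one α hα0, one_pow, one_mul]

lemma mem_cycClass_iff [DecidableEq F] {R : Type*} [CommRing R] [Nontrivial R]
    (hα : IsPrimitiveElt α) (hα0 : α ≠ 0) (χ : MulChar F R) {i : ℕ} (hi : i < orderOf χ) {u : F} :
    u ∈ cycClass α (orderOf χ) i ↔ χ u = χ α ^ i := by
  have hζ := hα.isPrimitiveRoot_apply hα0 χ
  simp only [cycClass, Finset.mem_image, Finset.mem_range]
  constructor
  · rintro ⟨j, -, rfl⟩
    rw [map_pow, pow_add, pow_mul, hζ.pow_eq_one, one_pow, one_mul]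
  · intro hu
    have hu0 : u ≠ 0 := by
      rintro rfl
      have hunit : IsUnit (χ α ^ i) := ((isUnit_iff_ne_zero.2 hα0).map χ).pow i
      exact not_isUnit_zero (χ.map_zero ▸ hu ▸ hunit)
    obtain ⟨n, hn, rfl⟩ := hα.exists_lt_pow_eq hα0 hu0
    rw [map_pow, ← pow_mod_orderOf, ← hζ.eq_orderOf] at hu
    have hni : n % orderOf χ = i := hζ.pow_inj (Nat.mod_lt n (Nat.zero_lt_of_lt hi)) hi hu
    exact ⟨n / orderOf χ, (Nat.div_le_self _ _).trans_lt hn, by rw [← hni, Nat.div_add_mod]⟩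

lemma mulChar_neg_one {R : Type*} [CommRing R] [IsDomain R] (hα : IsPrimitiveElt α) (hα0 : α ≠ 0)
    (hF : ringChar F ≠ 2) {χ : MulChar F R} {f : ℕ} (hf : Odd f)
    (hcard : Fintype.card F - 1 = orderOf χ * f) : χ (-1) = -1 := by
  have hsq : χ (-1) ^ 2 = 1 := by rw [← map_pow, neg_one_sq, map_one]
  refine (sq_eq_one_iff.1 hsq).resolve_left fun hone ↦ ?_
  obtain ⟨n, hn⟩ := hα (-1) (neg_ne_zero.2 one_ne_zero)
  rw [← hn, map_pow] at hone
  obtain ⟨k, rfl⟩ := (hα.isPrimitiveRoot_apply hα0 χ).dvd_of_pow_eq_one n hone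
  have hpow : (-1 : F) ^ f = 1 := by
    rw [← hn, ← pow_mul, mul_right_comm, ← hcard, pow_mul,
      FiniteField.pow_card_sub_one_eq_one α hα0, one_pow]
  exact Ring.neg_one_ne_one_of_char_ne_two hF (hf.neg_one_pow.symm.trans hpow)

end IsPrimitiveElt

lemma orderOf_mul_card_mulChar_eq {F R : Type*} [Field F] [Fintype F] [CommRing R] [IsDomain R]
    [CharZero R] [DecidableEq R] (χ : MulChar F R) {v : F} (hv : v ≠ 0) :
    orderOf χ * #{t | χ t = χ v} = Fintype.card F - 1 := by
  classical
  have hlevel (t : F) : χ (t * v⁻¹) = 1 ↔ χ t = χ v := by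
    have hinv : χ v⁻¹ * χ v = 1 := by rw [← map_mul, inv_mul_cancel₀ hv, map_one]
    rw [map_mul, ← mul_left_inj' (right_ne_zero_of_mul_eq_one hinv), mul_assoc, hinv, mul_one,
      one_mul]
  have hpos : 0 < orderOf χ := Nat.pos_of_dvd_of_pos χ.orderOf_dvd_card_sub_one
    (Nat.sub_pos_of_lt Fintype.one_lt_card)
  have hsum {j : ℕ} (hj : j ∈ Finset.range (orderOf χ)) (hj0 : j ≠ 0) : ∑ t, (χ ^ j) t = 0 :=
    MulChar.sum_eq_zero_of_ne_one (pow_ne_one_of_orderOf_not_dvd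
      (Nat.not_dvd_of_pos_of_lt (Nat.pos_of_ne_zero hj0) (Finset.mem_range.1 hj)))
  have h : (orderOf χ * #{t | χ t = χ v} : R) = Fintype.card Fˣ := by
    calc (orderOf χ * #{t | χ t = χ v} : R)
        = ∑ t, ∑ j ∈ Finset.range (orderOf χ), (χ ^ j) (t * v⁻¹) := by
          simp only [sum_mulChar_pow_apply (pow_orderOf_eq_one χ), hlevel]
          rw [← Finset.sum_filter, Finset.sum_const, nsmul_eq_mul, mul_comm]
      _ = ∑ j ∈ Finset.range (orderOf χ), ∑ t, (χ ^ j) t := by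
          rw [Finset.sum_comm]
          refine Finset.sum_congr rfl fun j _ ↦ ?_
          exact Equiv.sum_comp (Equiv.mulRight₀ v⁻¹ (inv_ne_zero hv)) fun t ↦ (χ ^ j) t
      _ = ∑ t, (χ ^ 0) t :=
          Finset.sum_eq_single_of_mem 0 (Finset.mem_range.2 hpos) fun j ↦ hsum
      _ = Fintype.card Fˣ := by rw [pow_zero, MulChar.sum_one_eq_card_units]
  rw [← Fintype.card_units]
  exact_mod_cast h

section DifferenceFamily

variable [Fintype F] [DecidableEq F] {K : Type*} [Field K]

lemma count_intDiff {G : Type*} [AddCommGroup G] [DecidableEq G] (D : Finset G) {d : G}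
    (hd : d ≠ 0) : Multiset.count d (intDiff D) = #{x ∈ D | x - d ∈ D} := by
  rw [intDiff, Multiset.count_map, ← Finset.filter_val, Finset.card_val]
  refine Finset.card_nbij' Prod.fst (fun x ↦ (x, x - d)) ?_ ?_ ?_ ?_
  · rintro ⟨x, y⟩ h
    simp only [Finset.coe_filter, Finset.mem_filter, Finset.mem_product, Set.mem_ofPred_eq] at h ⊢
    rw [h.2, sub_sub_cancel]
    exact h.1.1
  · intro x hx
    simp only [Finset.coe_filter, Finset.mem_filter, Finset.mem_product, Set.mem_ofPred_eq] at hx ⊢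
    exact ⟨⟨hx, fun h ↦ hd (sub_eq_self.1 h.symm)⟩, (sub_sub_cancel x d).symm⟩
  · rintro ⟨x, y⟩ h
    simp only [Finset.coe_filter, Finset.mem_filter, Set.mem_ofPred_eq] at h
    simp only [h.2, sub_sub_cancel]
  · exact fun x _ ↦ rfl

/-- Each solution of `x - y = d` corresponds to the ratio `t = y / x`. -/
lemma count_intDiff_mulChar_eq [DecidableEq K] (χ : MulChar F K) {c : K} (hc : c ≠ 0) {d : F}
    (hd : d ≠ 0) :
    Multiset.count d (intDiff {u | χ u = c}) = cyclotomicNumber χ (χ d * c⁻¹) := by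
  have hdiv (a b : F) : χ (a / b) = χ a * (χ b)⁻¹ := by
    rw [div_eq_mul_inv, map_mul, ← MulChar.inv_apply', MulChar.inv_apply_eq_inv']
  have hne {x : F} (hx : χ x ≠ 0) : x ≠ 0 := by
    rintro rfl
    exact hx χ.map_zero
  have hd0 : χ d ≠ 0 := ((isUnit_iff_ne_zero.2 hd).map χ).ne_zero
  rw [count_intDiff _ hd, cyclotomicNumber]
  refine Finset.card_nbij' (fun x ↦ (x - d) / x) (fun t ↦ d / (1 - t)) ?_ ?_ ?_ ?_
  all_goals
    intro x hx
    simp only [Finset.coe_filter, Finset.mem_filter, Finset.mem_univ, true_and,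
      Set.mem_ofPred_eq] at hx ⊢
  · obtain ⟨rfl, hy⟩ := hx
    have hsub : 1 - (x - d) / x = d / x := by rw [sub_div, div_self (hne hc), sub_sub_cancel]
    rw [hsub, hdiv, hdiv, hy]
    exact ⟨mul_inv_cancel₀ hc, rfl⟩
  · obtain ⟨hx1, hxc⟩ := hx
    have hx0 : 1 - x ≠ 0 := hne (by rw [hxc]; exact mul_ne_zero hd0 (inv_ne_zero hc))
    have hχ : χ (d / (1 - x)) = c := by
      rw [hdiv, hxc]
      field_simp
    have hsub : d / (1 - x) - d = x * (d / (1 - x)) := by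
      field_simp
      ring
    exact ⟨hχ, by rw [hsub, map_mul, hx1, hχ, one_mul]⟩
  · have hx0 : x ≠ 0 := hne (by rw [hx.1]; exact hc)
    rw [sub_div, div_self hx0, sub_sub_cancel, div_div_cancel₀ hd]
  · have hx0 : 1 - x ≠ 0 := hne (by rw [hx.2]; exact mul_ne_zero hd0 (inv_ne_zero hc))
    field_simp
    ring

lemma count_zero_intDiff {G : Type*} [AddCommGroup G] [DecidableEq G] (D : Finset G) :
    Multiset.count 0 (intDiff D) = 0 := by
  simp only [intDiff, Multiset.count_eq_zero, Multiset.mem_map, Finset.mem_val, Finset.mem_filter,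
    not_exists, not_and]
  exact fun p hp hsub ↦ hp.2 (sub_eq_zero.1 hsub)

variable {χ : MulChar F K} {r : ℕ}

lemma IsPrimitiveElt.cycClass_eq_filter [DecidableEq K] (hα : IsPrimitiveElt α) (hα0 : α ≠ 0)
    {i : ℕ} (hi : i < orderOf χ) :
    cycClass α (orderOf χ) i = ({u | χ u = χ α ^ i} : Finset F) := by
  ext u
  rw [hα.mem_cycClass_iff hα0 χ hi, Finset.mem_filter_univ]

lemma IsPrimitiveElt.mem_cycClass_zero_iff (hα : IsPrimitiveElt α) (hα0 : α ≠ 0) {e : ℕ}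
    (hχ : orderOf χ = e * r) (he : 0 < e) (hr : r ≠ 0) {u : F} :
    u ∈ cycClass α e 0 ↔ χ u ^ r = 1 := by
  have hord : orderOf (χ ^ r) = e := by
    rw [orderOf_pow_of_dvd hr (hχ ▸ dvd_mul_left r e), hχ,
      Nat.mul_div_cancel _ (Nat.pos_of_ne_zero hr)]
  rw [← hord, hα.mem_cycClass_iff hα0 (χ ^ r) (hord ▸ he), pow_zero, MulChar.pow_apply' χ hr]

variable {ι : Type*} [Fintype ι] {i : ι → ℕ} {u v : ℕ}

lemma IsPrimitiveElt.count_intDiff_cycClass (hα : IsPrimitiveElt α) (hα0 : α ≠ 0)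
    (hχ : orderOf χ = 2 * r) (hu : ∀ w, w ^ r = 1 → cyclotomicNumber χ w = u)
    (hv : ∀ w, w ^ r = -1 → cyclotomicNumber χ w = v) {i : ℕ} (hi : i < 2 * r) {d : F}
    (hd : d ≠ 0) :
    Multiset.count d (intDiff (cycClass α (2 * r) i)) =
      if d ∈ cycClass α 2 0 ↔ Even i then u else v := by
  classical
  have hr : r ≠ 0 := by omega
  have hζ := hα.isPrimitiveRoot_apply hα0 χ
  have hαi : χ α ^ i ≠ 0 := pow_ne_zero _ (hζ.ne_zero (by omega))
  have hαr : χ α ^ r = -1 := (hζ.pow (by omega) (hχ.trans (mul_comm 2 r))).eq_neg_one_of_two_right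
  have hdr : χ d ^ r = 1 ∨ χ d ^ r = -1 := by
    rw [← sq_eq_one_iff, ← pow_mul, mul_comm, ← hχ,
      ← MulChar.pow_apply' χ (by omega : orderOf χ ≠ 0), pow_orderOf_eq_one,
      MulChar.one_apply (isUnit_iff_ne_zero.2 hd)]
  have hw : (χ d * (χ α ^ i)⁻¹) ^ r = χ d ^ r * (-1) ^ i := by
    rw [mul_pow, inv_pow, ← pow_mul, mul_comm i, pow_mul, hαr, ← inv_pow, inv_neg_one]
  have hneg : (-1 : K) ≠ 1 := fun h ↦ by
    have := (hζ.pow (by omega) (hχ.trans (mul_comm 2 r))).ne_one one_lt_two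
    exact this (hαr.trans h)
  have hd2 : d ∈ cycClass α 2 0 ↔ χ d ^ r = 1 := hα.mem_cycClass_zero_iff hα0 hχ two_pos hr
  rw [← hχ, hα.cycClass_eq_filter hα0 (hχ ▸ hi), count_intDiff_mulChar_eq χ hαi hd]
  rcases hdr with h1 | h1 <;> rcases Nat.even_or_odd i with h2 | h2 <;>
    rw [h1, h2.neg_one_pow] at hw <;> rw [h1] at hd2
  · rw [if_pos (by simp only [hd2, h2]), hu _ (by rw [hw, one_mul])]
  · rw [if_neg (by simpa [hd2] using h2), hv _ (by rw [hw, one_mul])]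
  · rw [if_neg (by simpa [hd2, hneg] using h2), hv _ (by rw [hw, mul_one])]
  · rw [if_pos (by simpa [hd2, hneg] using h2), hu _ (by rw [hw, neg_one_mul, neg_neg])]

lemma IsPrimitiveElt.isDPDF_cycClass [CharZero K] (hα : IsPrimitiveElt α) (hα0 : α ≠ 0)
    (hχ : orderOf χ = 2 * r) (hr : r ≠ 0) (hinj : Function.Injective i) (hi : ∀ k, i k < 2 * r)
    (hu : ∀ w, w ^ r = 1 → cyclotomicNumber χ w = u)
    (hv : ∀ w, w ^ r = -1 → cyclotomicNumber χ w = v) :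
    IsDPDF (fun k ↦ cycClass α (2 * r) (i k)) (Fintype.card F) (Fintype.card ι)
      (fun _ ↦ (Fintype.card F - 1) / (2 * r)) (cycClass α 2 0)
      (#{k | Even (i k)} * u + #{k | Odd (i k)} * v)
      (#{k | Even (i k)} * v + #{k | Odd (i k)} * u) := by
  classical
  have hζ := hα.isPrimitiveRoot_apply hα0 χ
  have hmem {k : ι} {t : F} : t ∈ cycClass α (2 * r) (i k) ↔ χ t = χ α ^ i k := by
    rw [← hχ, hα.mem_cycClass_iff hα0 χ (hχ ▸ hi k)]
  have hcard (k : ι) : (cycClass α (2 * r) (i k)).card = (Fintype.card F - 1) / (2 * r) := by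
    rw [← orderOf_mul_card_mulChar_eq χ (pow_ne_zero (i k) hα0), hχ,
      Nat.mul_div_cancel_left _ (by omega), ← hχ, hα.cycClass_eq_filter hα0 (hχ ▸ hi k), map_pow]
  refine ⟨rfl, rfl, fun k h0 ↦ ?_, hcard, fun k l hkl ↦ ?_, ?_⟩
  · exact pow_ne_zero (i k) (hζ.ne_zero (by omega)) ((hmem.1 h0).symm.trans χ.map_zero)
  · refine Finset.disjoint_left.2 fun t hk hl ↦ hkl (hinj ?_)
    exact hζ.pow_inj (hχ ▸ hi k) (hχ ▸ hi l) ((hmem.1 hk).symm.trans (hmem.1 hl))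
  · ext d
    rw [Multiset.count_sum', Multiset.count_add, Multiset.count_nsmul, Multiset.count_nsmul,
      Multiset.count_eq_of_nodup (cycClass α 2 0).nodup,
      Multiset.count_eq_of_nodup (Gstar F \ cycClass α 2 0).nodup]
    simp only [Finset.mem_val, Finset.mem_sdiff, Gstar, Finset.mem_erase, Finset.mem_univ, and_true]
    rcases eq_or_ne d 0 with rfl | hd
    · simp [count_zero_intDiff, hα.mem_cycClass_zero_iff hα0 hχ two_pos hr, MulChar.map_zero, hr]
    simp only [hα.count_intDiff_cycClass hα0 hχ hu hv (hi _) hd]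
    by_cases hd2 : d ∈ cycClass α 2 0
    · simp [hd2, Finset.sum_ite]
    · simp [hd, hd2, Finset.sum_ite, add_comm]

end DifferenceFamily

end CyclotomicClasses

section OrderEightFamily

/-! ### The parameters of the family -/

lemma exists_mulChar_orderOf_eq_eight {F : Type*} [Field F] [Fintype F]
    (h : 8 ∣ Fintype.card F - 1) : ∃ χ : MulChar F ℂ, orderOf χ = 8 :=
  MulChar.exists_mulChar_orderOf F h (Complex.isPrimitiveRoot_exp 8 (by norm_num))

lemma eq_nine_or_prime_of_prime_pow_eq_one_add {p m : ℕ} {b : ℤ} (hp : p.Prime)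
    (h16 : p ^ m % 16 = 9) (hb : ((p ^ m : ℕ) : ℤ) = 1 + 2 * b ^ 2) :
    p ^ m = 9 ∨ (p ^ m).Prime := by
  rcases Nat.even_or_odd' m with ⟨k, hk | hk⟩
  · left
    have hk0 : k ≠ 0 := by
      rintro rfl
      simp [hk] at h16
    have hm : p ^ m = (p ^ k) ^ 2 := by rw [hk, mul_comm, pow_mul]
    rw [hm] at h16 hb ⊢
    have hb' : (p ^ k) ^ 2 = 1 + 2 * b.natAbs ^ 2 := by
      zify
      rw [sq_abs]
      exact_mod_cast hb
    rw [eq_three_of_sq_eq_one_add (hp.isPrimePow.pow hk0) h16 hb']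
    norm_num
  · right
    subst hk
    have hp8 : p % 8 = 1 := mod_eight_eq_one_of_pow (n := k) (by omega)
    have : Fact p.Prime := ⟨hp⟩
    obtain ⟨χ, hχ⟩ := exists_mulChar_orderOf_eq_eight (F := ZMod p) (by rw [ZMod.card]; omega)
    obtain ⟨u, v, -, huv⟩ := exists_jacobiSum_eq_of_orderOf_eq_eight hχ
    rw [ZMod.card] at huv
    have hk0 : k = 0 := eq_zero_of_prime_pow_eq_one_add (Nat.prime_iff_prime_int.1 hp) (by omega)
      huv.symm (by exact_mod_cast hb)
    simpa [hk0] using hp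

section Signs

variable {q : ℕ} (hq : q = 9 ∨ q.Prime) (hq16 : q % 16 = 9)

include hq hq16

lemma eq_neg_one_of_sq_add_two_mul_sq {A B b : ℤ} (hAB : A ^ 2 + 2 * B ^ 2 = q)
    (hb : (q : ℤ) = 1 + 2 * b ^ 2) (hA : 8 ∣ A + 1) : A = -1 := by
  rcases hq with rfl | hq
  · have : A ^ 2 ≤ 3 ^ 2 := by
      push_cast at hAB
      nlinarith [sq_nonneg B]
    have := abs_le_of_sq_le_sq' this (by norm_num)
    omega
  · have hq2 : ¬ (q : ℤ) ∣ 2 := fun h ↦ by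
      have := Int.le_of_dvd two_pos h
      omega
    have := sq_eq_sq_of_prime_eq_sq_add (Nat.prime_iff_prime_int.1 hq) hq2 hq2 le_rfl hAB.symm
      (z := 1) (w := b) (by rw [hb, one_pow])
    rcases sq_eq_sq_iff_eq_or_eq_neg.1 this with h | h <;> omega

lemma eq_neg_of_sq_add_four_mul_sq {X Y x y : ℤ} (hXY : X ^ 2 + 4 * Y ^ 2 = q)
    (hxy : (q : ℤ) = x ^ 2 + 4 * y ^ 2) (hX : X % 4 = 3) (hx : x % 4 = 1) : X = -x := by
  suffices X ^ 2 = x ^ 2 by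
    rcases sq_eq_sq_iff_eq_or_eq_neg.1 this with h | h <;> omega
  rcases hq with rfl | hq
  · have hnine {x y : ℤ} (h : x ^ 2 + 4 * y ^ 2 = 9) (hx : Odd x) : x ^ 2 = 9 := by
      have hy : y ^ 2 < 2 ^ 2 := by nlinarith [sq_nonneg x]
      have := Int.eight_dvd_sq_sub_one_of_odd hx
      have := abs_lt_of_sq_lt_sq' hy (by norm_num)
      obtain ⟨h1, h2⟩ := this
      interval_cases y <;> omega
    rw [hnine hXY (Int.odd_iff.2 (by omega)), hnine hxy.symm (Int.odd_iff.2 (by omega))]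
  · have hq2 : ¬ (q : ℤ) ∣ 2 := fun h ↦ by
      have := Int.le_of_dvd two_pos h
      omega
    have hq4 : ¬ (q : ℤ) ∣ 4 := fun h ↦ by
      have := Int.le_of_dvd four_pos h
      omega
    exact sq_eq_sq_of_prime_eq_sq_add (Nat.prime_iff_prime_int.1 hq) hq2 hq4 (by norm_num)
      hXY.symm hxy

end Signs

section CyclotomicNumbers

variable {F : Type*} [Field F] [Fintype F] {χ : MulChar F ℂ}

lemma eight_dvd_re_jacobiSum_add_one (hχ : orderOf χ = 8) (hneg : χ (-1) = -1) (h2 : χ 2 ^ 2 = 1)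
    {A : ℤ} (hA : (jacobiSum χ (χ ^ 4)).re = A) : 8 ∣ A + 1 := by
  have hζ : IsPrimitiveRoot _ 8 := Complex.isPrimitiveRoot_exp 8 (by norm_num)
  have := (cyclotomicNumber_order_eight_sub hχ hneg h2 hζ hA).1
  omega

lemma exists_lt_four_cyclotomicNumber_eq (hneg : χ (-1) = -1) {ζ : ℂ} (hζ : IsPrimitiveRoot ζ 8)
    {w : ℂ} (hw : w ^ 8 = 1) :
    ∃ k < 4, cyclotomicNumber χ w = cyclotomicNumber χ (ζ ^ k) ∧ w ^ 4 = (-1) ^ k := by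
  have hpow (k : ℕ) : (ζ ^ k) ^ 4 = (-1) ^ k := by
    rw [← pow_mul, mul_comm, pow_mul, pow_four_eq_neg_one hζ]
  obtain ⟨k, hk, rfl⟩ := hζ.eq_pow_of_pow_eq_one hw
  rcases lt_or_ge k 4 with h4 | h4
  · exact ⟨k, h4, rfl, hpow k⟩
  · obtain ⟨l, rfl⟩ := Nat.exists_eq_add_of_le' h4
    refine ⟨l, by omega, cyclotomicNumber_pow_add_four hneg hζ l, ?_⟩
    rw [hpow, pow_add]
    norm_num

lemma exists_cyclotomicNumber_order_eight_eq (hχ : orderOf χ = 8) (hneg : χ (-1) = -1)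
    (h2 : χ 2 ^ 2 = 1) {X : ℤ} (hA : (jacobiSum χ (χ ^ 4)).re = ((-1 : ℤ) : ℝ))
    (hX : (jacobiSum (χ ^ 2) (χ ^ 4)).re = (X : ℝ)) :
    ∃ u v : ℕ, (∀ w, w ^ 4 = 1 → cyclotomicNumber χ w = u) ∧
      (∀ w, w ^ 4 = -1 → cyclotomicNumber χ w = v) ∧
      32 * (u + v : ℤ) = Fintype.card F - 9 ∧ 16 * (u - v : ℤ) = X - 3 := by
  obtain ⟨ζ, hζ⟩ : ∃ ζ : ℂ, IsPrimitiveRoot ζ 8 := ⟨_, Complex.isPrimitiveRoot_exp 8 (by norm_num)⟩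
  have hsum := sum_cyclotomicNumber_order_eight hχ hneg hζ
  have halt := cyclotomicNumber_order_eight_alternating_sum hχ hneg hζ hA hX
  obtain ⟨h02, h13⟩ := cyclotomicNumber_order_eight_sub hχ hneg h2 hζ hA
  simp only [Finset.sum_range_succ, Finset.sum_range_zero] at hsum halt
  refine ⟨cyclotomicNumber χ (ζ ^ 0), cyclotomicNumber χ (ζ ^ 1), fun w hw ↦ ?_, fun w hw ↦ ?_,
    by omega, by omega⟩
  · obtain ⟨k, hk4, hwk, hk⟩ := exists_lt_four_cyclotomicNumber_eq hneg hζ (w := w)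
      (by rw [show 8 = 4 * 2 from rfl, pow_mul, hw, one_pow])
    rw [hw, eq_comm, neg_one_pow_eq_one_iff_even (by norm_num)] at hk
    interval_cases k <;> first | omega | exact absurd hk (by decide)
  · obtain ⟨k, hk4, hwk, hk⟩ := exists_lt_four_cyclotomicNumber_eq hneg hζ (w := w)
      (by rw [show 8 = 4 * 2 from rfl, pow_mul, hw, neg_one_sq])
    rw [hw, eq_comm, neg_one_pow_eq_neg_one_iff_odd (by norm_num)] at hk
    interval_cases k <;> first | omega | exact absurd hk (by decide)

lemma exists_cyclotomicNumber_order_eight_of_eq_one_add (hχ : orderOf χ = 8)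
    (hneg : χ (-1) = -1) (h2 : χ 2 ^ 2 = 1) (hq : Fintype.card F = 9 ∨ (Fintype.card F).Prime)
    (hq16 : Fintype.card F % 16 = 9) {b x y : ℤ} (hb : (Fintype.card F : ℤ) = 1 + 2 * b ^ 2)
    (hxy : (Fintype.card F : ℤ) = x ^ 2 + 4 * y ^ 2) (hx : x % 4 = 1) :
    ∃ u v : ℕ, (∀ w, w ^ 4 = 1 → cyclotomicNumber χ w = u) ∧
      (∀ w, w ^ 4 = -1 → cyclotomicNumber χ w = v) ∧
      16 * (3 * u + v : ℤ) = Fintype.card F - 12 - x ∧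
      16 * (3 * v + u : ℤ) = Fintype.card F - 6 + x := by
  obtain ⟨A, B, hJ₈, hAB⟩ := exists_jacobiSum_eq_of_orderOf_eq_eight hχ
  obtain ⟨X, Y, hJ₄, hXY⟩ := exists_jacobiSum_eq_of_orderOf_eq_four (ψ := χ ^ 2) (by
    rw [orderOf_pow_of_dvd two_ne_zero (hχ ▸ by norm_num), hχ])
  rw [← pow_mul] at hJ₄
  have hA : (jacobiSum χ (χ ^ 4)).re = (A : ℝ) := by simp [hJ₈]
  have hX : (jacobiSum (χ ^ 2) (χ ^ 4)).re = (X : ℝ) := by simp [hJ₄]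
  obtain rfl : A = -1 := eq_neg_one_of_sq_add_two_mul_sq hq hq16 hAB hb
    (eight_dvd_re_jacobiSum_add_one hχ hneg h2 hA)
  obtain ⟨u, v, hu, hv, hsum, hdiff⟩ := exists_cyclotomicNumber_order_eight_eq hχ hneg h2 hA hX
  have hXx : X = -x := eq_neg_of_sq_add_four_mul_sq hq hq16 hXY hxy (by omega) hx
  exact ⟨u, v, hu, hv, by omega, by omega⟩

end CyclotomicNumbers

lemma IsPrimitiveElt.isDPDF_cycClass_zero_one_four_six {F K : Type*} [Field F] [Fintype F]
    [DecidableEq F] [Field K] [CharZero K] {α : F} (hα : IsPrimitiveElt α) (hα0 : α ≠ 0)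
    {χ : MulChar F K} (hχ : orderOf χ = 8) {u v : ℕ}
    (hu : ∀ w, w ^ 4 = 1 → cyclotomicNumber χ w = u)
    (hv : ∀ w, w ^ 4 = -1 → cyclotomicNumber χ w = v) :
    IsDPDF ![cycClass α 8 0, cycClass α 8 1, cycClass α 8 4, cycClass α 8 6] (Fintype.card F) 4
      (fun _ ↦ (Fintype.card F - 1) / 8) (cycClass α 2 0) (3 * u + v) (3 * v + u) := by
  have hclasses : ![cycClass α 8 0, cycClass α 8 1, cycClass α 8 4, cycClass α 8 6] =
      fun k ↦ cycClass α 8 (![0, 1, 4, 6] k) := by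
    ext k
    fin_cases k <;> rfl
  have heven : #{k | Even (![0, 1, 4, 6] k)} = 3 := rfl
  have hodd : #{k | Odd (![0, 1, 4, 6] k)} = 1 := rfl
  have hfamily := hα.isDPDF_cycClass hα0 (i := ![0, 1, 4, 6]) hχ four_ne_zero (by decide)
    (by decide) hu hv
  rw [heven, hodd, one_mul, one_mul] at hfamily
  rw [hclasses]
  exact hfamily

end OrderEightFamily

/-- Let `q = p^m ≡ 9 (mod 16)` be a prime power in which `2` is a quartic
residue, and let `x, y, a, b` be the integers with `q = x² + 4y²`, `x ≡ 1 (mod 4)`, and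
`q = a² + 2b²`, `a ≡ 1 (mod 4)`, with `a = 1`.  Then
`D = {C_0^8, C_1^8, C_4^8, C_6^8}` is a
`(q,4,(q-1)/8;(q-12-x)/16,(q-6+x)/16)`-DPDF relative to `C_0^2`. -/
theorem stmt_14 {F : Type*} [Field F] [Fintype F] [DecidableEq F]
    (q p m : ℕ) (hp : p.Prime) (hq : Fintype.card F = q) (hqpm : q = p ^ m)
    (hq16 : q % 16 = 9)
    (α : F) (hα : IsPrimitiveElt α)
    (h2 : (2 : F) ∈ cycClass α 4 0)
    (x y a b : ℤ) (hxy : (q : ℤ) = x ^ 2 + 4 * y ^ 2) (hx4 : x % 4 = 1)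
    (hab : (q : ℤ) = a ^ 2 + 2 * b ^ 2) (ha4 : a % 4 = 1) (ha : a = 1) :
    ∃ lam mu : ℕ,
      16 * (lam : ℤ) = (q : ℤ) - 12 - x ∧
      16 * (mu : ℤ) = (q : ℤ) - 6 + x ∧
      IsDPDF ![cycClass α 8 0, cycClass α 8 1, cycClass α 8 4, cycClass α 8 6]
        q 4 (fun _ => (q - 1) / 8) (cycClass α 2 0) lam mu := by
  subst hq ha
  rw [one_pow] at hab
  have hq : Fintype.card F = 9 ∨ (Fintype.card F).Prime := by
    rw [hqpm] at hab hq16 ⊢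
    exact eq_nine_or_prime_of_prime_pow_eq_one_add hp hq16 hab
  obtain ⟨χ, hχ⟩ := exists_mulChar_orderOf_eq_eight (F := F) (by omega)
  have hα0 : α ≠ 0 := hα.ne_zero (by omega)
  have hchar : ringChar F ≠ 2 := mt FiniteField.even_card_iff_char_two.1 (by omega)
  have hneg : χ (-1) = -1 := hα.mulChar_neg_one hα0 hchar (f := (Fintype.card F - 1) / 8)
    (Nat.odd_iff.2 (by omega)) (by rw [hχ]; omega)
  have h2χ : χ 2 ^ 2 = 1 := (hα.mem_cycClass_zero_iff hα0 hχ four_pos two_ne_zero).1 h2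
  obtain ⟨u, v, hu, hv, hlam, hmu⟩ := exists_cyclotomicNumber_order_eight_of_eq_one_add
    hχ hneg h2χ hq hq16 hab hxy hx4
  exact ⟨3 * u + v, 3 * v + u, by exact_mod_cast hlam, by exact_mod_cast hmu,
    hα.isDPDF_cycClass_zero_one_four_six hα0 hχ hu hv⟩
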